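/- arXiv:2006.09210 — 3 statements merged into one kernel-verified Lean document; each statement's English description precedes it below -/
import Mathlib

section
/- Let (H,α,R) be a quasitriangular Hom-Hopf algebra, (B,β,⟨|⟩) a coquasitriangular Hom-Hopf algebra with bijective antipode S_B, and (M,μ_M),(N,ν_N) (H,B)-Hom-Long dimodules. Define C_{M,N}:M⊗N→N⊗M by C_{M,N}(m⊗n)=⟨m₋₁|n₋₁⟩ R²·ν_N⁻²(n₀)⊗R¹·μ_M⁻²(m₀), and D:N⊗M→M⊗N by D(n⊗m)=⟨S_B⁻¹(m₋₁)|n₋₁⟩ S_H(R¹)·μ_M⁻²(m₀)⊗R²·ν_N⁻²(n₀). Then D∘C_{M,N}=id_{M⊗N} and C_{M,N}∘D=id_{N⊗M}; in particular C_{M,N} is a linear isomorphism. -/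
/-!
An element `X ∈ H ⊗ H` gives the operator `actOp X : m ⊗ n ↦ X¹·μ⁻²(m) ⊗ X²·ν⁻²(n)` on `M ⊗ N`,
and a linear form `φ` on `B ⊗ B` gives `coactOp φ : m ⊗ n ↦ φ(m₋₁ ⊗ n₋₁) m₀ ⊗ n₀`. With `τ` the
flip, `C = τ ∘ actOp R ∘ coactOp ⟨|⟩` and
`D = actOp ((S ⊗ id) R) ∘ coactOp ⟨S⁻¹ · | · ⟩ ∘ τ` (`braidL_eq`, `braidLinv_eq`). For elements and
forms invariant under the structure automorphisms, the two kinds of operators commute by the Long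
compatibility condition (`coactOp_comp_actOp`). It therefore suffices to compose operators of the
same kind: the action operators of inverse elements compose to `μ⁻² ⊗ ν⁻²` (`actOp_comp_actOp`),
the coaction operators of convolution-inverse forms to `μ² ⊗ ν²` (`coactOp_comp_coactOp`), and these
cancel.

That `(S ⊗ id) R` is a two-sided inverse of `R` follows by contracting the axiom for `(Δ ⊗ id) R`
with the antipode. That `⟨S⁻¹ · | · ⟩` is a two-sided convolution inverse of the form reduces, by the
axiom for `⟨hg|l⟩`, to `S⁻¹(b₂) b₁ = ε(b) 1 = b₂ S⁻¹(b₁)`, which needs the antipode to be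
anti-multiplicative (`HomHopf.antipode_mul`). The latter comes from untwisting: since `α` is
bijective, `α⁻¹ ∘ mul` and `comul ∘ α⁻¹` form an ordinary Hopf algebra with the same antipode.
-/

open TensorProduct

/-- A Hom-bialgebra `(H, α)` over a field `k`. -/
structure HomBialgebra (k : Type*) [Field k] (H : Type*) [AddCommGroup H] [Module k H] where
  mul : H →ₗ[k] H →ₗ[k] H
  one : H
  comul : H →ₗ[k] H ⊗[k] H
  counit : H →ₗ[k] k
  auto : H ≃ₗ[k] H
  auto_mul : ∀ h h' : H, auto (mul h h') = mul (auto h) (auto h')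
  auto_one : auto one = one
  hom_assoc : ∀ h h' h'' : H, mul (auto h) (mul h' h'') = mul (mul h h') (auto h'')
  mul_one' : ∀ h : H, mul h one = auto h
  one_mul' : ∀ h : H, mul one h = auto h
  comul_auto : ∀ h : H,
    comul (auto h) = TensorProduct.map auto.toLinearMap auto.toLinearMap (comul h)
  counit_auto : ∀ h : H, counit (auto h) = counit h
  hom_coassoc : ∀ h : H,
    TensorProduct.map auto.toLinearMap comul (comul h)
      = TensorProduct.assoc k H H H (TensorProduct.map comul auto.toLinearMap (comul h))
  counit_comul : ∀ h : H,
    TensorProduct.lid k H (TensorProduct.map counit (LinearMap.id : H →ₗ[k] H) (comul h)) = auto h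
  comul_counit : ∀ h : H,
    TensorProduct.rid k H (TensorProduct.map (LinearMap.id : H →ₗ[k] H) counit (comul h)) = auto h
  comul_mul : ∀ h h' : H,
    comul (mul h h')
      = TensorProduct.map (TensorProduct.lift mul) (TensorProduct.lift mul)
          (TensorProduct.tensorTensorTensorComm k H H H H (comul h ⊗ₜ[k] comul h'))
  comul_one : comul one = one ⊗ₜ[k] one
  counit_mul : ∀ h h' : H, counit (mul h h') = counit h * counit h'
  counit_one : counit one = 1

/-- A Hom-Hopf algebra: a Hom-bialgebra with an antipode. -/
structure HomHopf (k : Type*) [Field k] (H : Type*) [AddCommGroup H] [Module k H]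
    extends HomBialgebra k H where
  antipode : H →ₗ[k] H
  antipode_left : ∀ h : H,
    TensorProduct.lift mul (TensorProduct.map antipode (LinearMap.id : H →ₗ[k] H) (comul h))
      = counit h • one
  antipode_right : ∀ h : H,
    TensorProduct.lift mul (TensorProduct.map (LinearMap.id : H →ₗ[k] H) antipode (comul h))
      = counit h • one
  antipode_auto : ∀ h : H, antipode (auto h) = auto (antipode h)

/-- A quasitriangular Hom-Hopf algebra `(H, α, R)`. -/
structure QTHomHopf (k : Type*) [Field k] (H : Type*) [AddCommGroup H] [Module k H]
    extends HomHopf k H where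
  R : H ⊗[k] H
  qha1a : TensorProduct.lid k H (TensorProduct.map counit (LinearMap.id : H →ₗ[k] H) R) = one
  qha1b : TensorProduct.rid k H (TensorProduct.map (LinearMap.id : H →ₗ[k] H) counit R) = one
  qha2 : TensorProduct.map comul auto.toLinearMap R
      = TensorProduct.map (TensorProduct.map auto.toLinearMap auto.toLinearMap)
          (TensorProduct.lift mul)
          (TensorProduct.tensorTensorTensorComm k H H H H (R ⊗ₜ[k] R))
  qha3 : TensorProduct.map auto.toLinearMap comul R
      = TensorProduct.map (TensorProduct.lift mul)
          ((TensorProduct.comm k H H).toLinearMap ∘ₗ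
            TensorProduct.map auto.toLinearMap auto.toLinearMap)
          (TensorProduct.tensorTensorTensorComm k H H H H (R ⊗ₜ[k] R))
  qha4 : ∀ h : H,
    TensorProduct.map (TensorProduct.lift mul) (TensorProduct.lift mul)
        (TensorProduct.tensorTensorTensorComm k H H H H
          ((TensorProduct.comm k H H (comul h)) ⊗ₜ[k] R))
      = TensorProduct.map (TensorProduct.lift mul) (TensorProduct.lift mul)
          (TensorProduct.tensorTensorTensorComm k H H H H (R ⊗ₜ[k] comul h))
  qha5 : TensorProduct.map auto.toLinearMap auto.toLinearMap R = R

/-- Triangularity: `R⁻¹ = R² ⊗ R¹`, i.e. `r²R¹ ⊗ r¹R² = 1 ⊗ 1`. -/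
def QTHomHopf.IsTriangular {k : Type*} [Field k] {H : Type*} [AddCommGroup H] [Module k H]
    (HQ : QTHomHopf k H) : Prop :=
  TensorProduct.map (TensorProduct.lift HQ.mul) (TensorProduct.lift HQ.mul)
      (TensorProduct.tensorTensorTensorComm k H H H H
        ((TensorProduct.comm k H H HQ.R) ⊗ₜ[k] HQ.R))
    = HQ.one ⊗ₜ[k] HQ.one

/-- A coquasitriangular Hom-Hopf algebra `(B, β, ⟨|⟩)`. -/
structure CQTHomHopf (k : Type*) [Field k] (B : Type*) [AddCommGroup B] [Module k B]
    extends HomHopf k B where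
  form : B →ₗ[k] B →ₗ[k] k
  cha1 : ∀ h g l : B, form (mul h g) (auto l)
      = LinearMap.mul' k k (TensorProduct.map (form (auto g)) (form (auto h)) (comul l))
  cha2 : ∀ h g l : B, form (auto h) (mul g l)
      = LinearMap.mul' k k
          (TensorProduct.map (form.flip (auto g)) (form.flip (auto l)) (comul h))
  cha3 : ∀ h g : B,
    TensorProduct.lid k B (TensorProduct.map (TensorProduct.lift form)
        ((TensorProduct.lift mul) ∘ₗ (TensorProduct.comm k B B).toLinearMap)
        (TensorProduct.tensorTensorTensorComm k B B B B (comul h ⊗ₜ[k] comul g)))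
      = TensorProduct.rid k B
          (TensorProduct.map (TensorProduct.lift mul) (TensorProduct.lift form)
            (TensorProduct.tensorTensorTensorComm k B B B B (comul h ⊗ₜ[k] comul g)))
  cha4a : ∀ h : B, form one h = counit h
  cha4b : ∀ h : B, form h one = counit h
  cha5 : ∀ h g : B, form (auto h) (auto g) = form h g

/-- Cotriangularity: `⟨h₁|g₁⟩⟨g₂|h₂⟩ = ε(h)ε(g)`. -/
def CQTHomHopf.IsCotriangular {k : Type*} [Field k] {B : Type*} [AddCommGroup B] [Module k B]
    (BC : CQTHomHopf k B) : Prop :=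
  ∀ h g : B,
    LinearMap.mul' k k (TensorProduct.map (TensorProduct.lift BC.form)
        ((TensorProduct.lift BC.form) ∘ₗ (TensorProduct.comm k B B).toLinearMap)
        (TensorProduct.tensorTensorTensorComm k B B B B (BC.comul h ⊗ₜ[k] BC.comul g)))
      = BC.counit h * BC.counit g

/-- A left Hom-module over a Hom-bialgebra `(H, α)`. -/
structure HomModule {k : Type*} [Field k] {H : Type*} [AddCommGroup H] [Module k H]
    (HA : HomBialgebra k H) (M : Type*) [AddCommGroup M] [Module k M] where
  act : H →ₗ[k] M →ₗ[k] M
  auto : M ≃ₗ[k] M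
  auto_act : ∀ (h : H) (m : M), auto (act h m) = act (HA.auto h) (auto m)
  act_act : ∀ (h h' : H) (m : M), act (HA.auto h) (act h' m) = act (HA.mul h h') (auto m)
  one_act : ∀ m : M, act HA.one m = auto m

/-- A left Hom-comodule over a Hom-bialgebra `(B, β)`. -/
structure HomComodule {k : Type*} [Field k] {B : Type*} [AddCommGroup B] [Module k B]
    (BA : HomBialgebra k B) (M : Type*) [AddCommGroup M] [Module k M] where
  coact : M →ₗ[k] B ⊗[k] M
  auto : M ≃ₗ[k] M
  coact_auto : ∀ m : M,
    coact (auto m) = TensorProduct.map BA.auto.toLinearMap auto.toLinearMap (coact m)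
  counit_coact : ∀ m : M,
    TensorProduct.lid k M (TensorProduct.map BA.counit (LinearMap.id : M →ₗ[k] M) (coact m))
      = auto m
  hom_coassoc : ∀ m : M,
    TensorProduct.map BA.auto.toLinearMap coact (coact m)
      = TensorProduct.assoc k B B M
          (TensorProduct.map BA.comul auto.toLinearMap (coact m))

/-- A Hom-algebra `(A, γ)`. -/
structure HomAlgebra (k : Type*) [Field k] (A : Type*) [AddCommGroup A] [Module k A] where
  mul : A →ₗ[k] A →ₗ[k] A
  one : A
  auto : A ≃ₗ[k] A
  auto_mul : ∀ a a' : A, auto (mul a a') = mul (auto a) (auto a')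
  auto_one : auto one = one
  hom_assoc : ∀ a a' a'' : A, mul (auto a) (mul a' a'') = mul (mul a a') (auto a'')
  mul_one' : ∀ a : A, mul a one = auto a
  one_mul' : ∀ a : A, mul one a = auto a

/-- A left Hom-module over a Hom-algebra `(A, γ)`. -/
structure HomModuleAlg {k : Type*} [Field k] {A : Type*} [AddCommGroup A] [Module k A]
    (AA : HomAlgebra k A) (M : Type*) [AddCommGroup M] [Module k M] where
  act : A →ₗ[k] M →ₗ[k] M
  auto : M ≃ₗ[k] M
  auto_act : ∀ (a : A) (m : M), auto (act a m) = act (AA.auto a) (auto m)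
  act_act : ∀ (a a' : A) (m : M), act (AA.auto a) (act a' m) = act (AA.mul a a') (auto m)
  one_act : ∀ m : M, act AA.one m = auto m

/-- An `(H, B)`-Hom-Long dimodule. -/
structure LongDimodule {k : Type*} [Field k] {H B : Type*}
    [AddCommGroup H] [Module k H] [AddCommGroup B] [Module k B]
    (HA : HomBialgebra k H) (BA : HomBialgebra k B)
    (M : Type*) [AddCommGroup M] [Module k M] where
  act : H →ₗ[k] M →ₗ[k] M
  coact : M →ₗ[k] B ⊗[k] M
  auto : M ≃ₗ[k] M
  auto_act : ∀ (h : H) (m : M), auto (act h m) = act (HA.auto h) (auto m)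
  act_act : ∀ (h h' : H) (m : M), act (HA.auto h) (act h' m) = act (HA.mul h h') (auto m)
  one_act : ∀ m : M, act HA.one m = auto m
  coact_auto : ∀ m : M,
    coact (auto m) = TensorProduct.map BA.auto.toLinearMap auto.toLinearMap (coact m)
  counit_coact : ∀ m : M,
    TensorProduct.lid k M (TensorProduct.map BA.counit (LinearMap.id : M →ₗ[k] M) (coact m))
      = auto m
  hom_coassoc : ∀ m : M,
    TensorProduct.map BA.auto.toLinearMap coact (coact m)
      = TensorProduct.assoc k B B M
          (TensorProduct.map BA.comul auto.toLinearMap (coact m))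
  compat : ∀ (h : H) (m : M),
    coact (act h m)
      = TensorProduct.map BA.auto.toLinearMap (act (HA.auto h)) (coact m)

section Helpers

variable {k H B M N : Type*} [Field k]
variable [AddCommGroup H] [Module k H] [AddCommGroup B] [Module k B]
variable [AddCommGroup M] [Module k M] [AddCommGroup N] [Module k N]

/-- The diagonal Hom-action on a tensor product: `h · (m ⊗ n) = h₁·m ⊗ h₂·n`. -/
noncomputable def tAct (comul : H →ₗ[k] H ⊗[k] H)
    (actM : H →ₗ[k] M →ₗ[k] M) (actN : H →ₗ[k] N →ₗ[k] N) :
    H →ₗ[k] (M ⊗[k] N) →ₗ[k] (M ⊗[k] N) :=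
  TensorProduct.curry
    ((TensorProduct.map (TensorProduct.lift actM) (TensorProduct.lift actN)) ∘ₗ
      (TensorProduct.tensorTensorTensorComm k H H M N).toLinearMap ∘ₗ
      (TensorProduct.map comul (LinearMap.id : M ⊗[k] N →ₗ[k] M ⊗[k] N)))

/-- The Hom-coaction on a tensor product: `ρ(m ⊗ n) = β⁻²(m₋₁ n₋₁) ⊗ (m₀ ⊗ n₀)`;
here `bInv2` stands for `β⁻²`. -/
noncomputable def tCoact (mulB : B →ₗ[k] B →ₗ[k] B) (bInv2 : B →ₗ[k] B)
    (coactM : M →ₗ[k] B ⊗[k] M) (coactN : N →ₗ[k] B ⊗[k] N) :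
    (M ⊗[k] N) →ₗ[k] B ⊗[k] (M ⊗[k] N) :=
  (TensorProduct.map (bInv2 ∘ₗ TensorProduct.lift mulB)
      (LinearMap.id : M ⊗[k] N →ₗ[k] M ⊗[k] N)) ∘ₗ
    (TensorProduct.tensorTensorTensorComm k B M B N).toLinearMap ∘ₗ
    (TensorProduct.map coactM coactN)

/-- `m ⊗ n ↦ R² · aM⁻¹(n) ⊗ R¹ · aN⁻¹(m)` (quasitriangular part of the Long braiding). -/
noncomputable def braidQT (R : H ⊗[k] H)
    (actM : H →ₗ[k] M →ₗ[k] M) (actN : H →ₗ[k] N →ₗ[k] N)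
    (aM : M ≃ₗ[k] M) (aN : N ≃ₗ[k] N) : M ⊗[k] N →ₗ[k] N ⊗[k] M :=
  TensorProduct.map (TensorProduct.lift actN) (TensorProduct.lift actM) ∘ₗ
    (TensorProduct.tensorTensorTensorComm k H H N M).toLinearMap ∘ₗ
    TensorProduct.mk k (H ⊗[k] H) (N ⊗[k] M) (TensorProduct.comm k H H R) ∘ₗ
    (TensorProduct.comm k M N).toLinearMap ∘ₗ
    TensorProduct.map aM.symm.toLinearMap aN.symm.toLinearMap

/-- `m ⊗ n ↦ ⟨m₋₁|n₋₁⟩ aN⁻¹(n₀) ⊗ aM⁻¹(m₀)` (coquasitriangular braiding). -/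
noncomputable def braidCQT (form : B →ₗ[k] B →ₗ[k] k)
    (coactM : M →ₗ[k] B ⊗[k] M) (coactN : N →ₗ[k] B ⊗[k] N)
    (aM : M ≃ₗ[k] M) (aN : N ≃ₗ[k] N) : M ⊗[k] N →ₗ[k] N ⊗[k] M :=
  (TensorProduct.comm k M N).toLinearMap ∘ₗ
    TensorProduct.map aM.symm.toLinearMap aN.symm.toLinearMap ∘ₗ
    (TensorProduct.lid k (M ⊗[k] N)).toLinearMap ∘ₗ
    TensorProduct.map (TensorProduct.lift form)
      (LinearMap.id : M ⊗[k] N →ₗ[k] M ⊗[k] N) ∘ₗ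
    (TensorProduct.tensorTensorTensorComm k B M B N).toLinearMap ∘ₗ
    TensorProduct.map coactM coactN

/-- The Long-dimodule braiding
`C(m ⊗ n) = ⟨m₋₁|n₋₁⟩ R² · aN⁻²(n₀) ⊗ R¹ · aM⁻²(m₀)`. -/
noncomputable def braidL (R : H ⊗[k] H) (form : B →ₗ[k] B →ₗ[k] k)
    (actM : H →ₗ[k] M →ₗ[k] M) (actN : H →ₗ[k] N →ₗ[k] N)
    (coactM : M →ₗ[k] B ⊗[k] M) (coactN : N →ₗ[k] B ⊗[k] N)
    (aM : M ≃ₗ[k] M) (aN : N ≃ₗ[k] N) : M ⊗[k] N →ₗ[k] N ⊗[k] M :=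
  braidQT R actM actN (aM.trans aM) (aN.trans aN) ∘ₗ
    (TensorProduct.lid k (M ⊗[k] N)).toLinearMap ∘ₗ
    TensorProduct.map (TensorProduct.lift form)
      (LinearMap.id : M ⊗[k] N →ₗ[k] M ⊗[k] N) ∘ₗ
    (TensorProduct.tensorTensorTensorComm k B M B N).toLinearMap ∘ₗ
    TensorProduct.map coactM coactN

/-- The action of `H ⊗ B` on a Long dimodule:
`(h ⊗ x) ⇀ m = ⟨x|m₋₁⟩ α⁻³(h) · μ⁻¹(m₀)`; `aInv3` stands for `α⁻³`, `muInv` for `μ⁻¹`. -/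
noncomputable def actHB (form : B →ₗ[k] B →ₗ[k] k) (aInv3 : H →ₗ[k] H)
    (act : H →ₗ[k] M →ₗ[k] M) (coact : M →ₗ[k] B ⊗[k] M) (muInv : M →ₗ[k] M) :
    (H ⊗[k] B) →ₗ[k] M →ₗ[k] M :=
  TensorProduct.curry
    ((TensorProduct.lid k M).toLinearMap ∘ₗ
      TensorProduct.map (TensorProduct.lift form)
        (TensorProduct.lift act ∘ₗ TensorProduct.map aInv3 muInv) ∘ₗ
      (TensorProduct.tensorTensorTensorComm k B H B M).toLinearMap ∘ₗ
      TensorProduct.map (TensorProduct.comm k H B).toLinearMap coact)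

/-- The coaction of `H ⊗ B` on a Long dimodule:
`ρ̄(m) = (R² ⊗ β⁻³(m₋₁)) ⊗ (R¹ · μ⁻¹(m₀))`; `bInv3` stands for `β⁻³`. -/
noncomputable def coactHB (R : H ⊗[k] H) (bInv3 : B →ₗ[k] B)
    (act : H →ₗ[k] M →ₗ[k] M) (coact : M →ₗ[k] B ⊗[k] M) (muInv : M →ₗ[k] M) :
    M →ₗ[k] (H ⊗[k] B) ⊗[k] M :=
  TensorProduct.map (TensorProduct.map (LinearMap.id : H →ₗ[k] H) bInv3)
      (TensorProduct.lift act ∘ₗ TensorProduct.map (LinearMap.id : H →ₗ[k] H) muInv) ∘ₗ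
    (TensorProduct.tensorTensorTensorComm k H H B M).toLinearMap ∘ₗ
    TensorProduct.mk k (H ⊗[k] H) (B ⊗[k] M) (TensorProduct.comm k H H R) ∘ₗ
    coact

end Helpers

section Assoc

variable {k U V W : Type*} [Field k]
variable [AddCommGroup U] [Module k U] [AddCommGroup V] [Module k V] [AddCommGroup W] [Module k W]

/-- The Hom-associator `(u ⊗ v) ⊗ w ↦ aU⁻¹(u) ⊗ (v ⊗ aW(w))`. -/
noncomputable def assocL (aU : U ≃ₗ[k] U) (aW : W ≃ₗ[k] W) :
    (U ⊗[k] V) ⊗[k] W →ₗ[k] U ⊗[k] (V ⊗[k] W) :=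
  TensorProduct.map aU.symm.toLinearMap
      (TensorProduct.map (LinearMap.id : V →ₗ[k] V) aW.toLinearMap) ∘ₗ
    (TensorProduct.assoc k U V W).toLinearMap

/-- The inverse Hom-associator `u ⊗ (v ⊗ w) ↦ (aU(u) ⊗ v) ⊗ aW⁻¹(w)`. -/
noncomputable def assocLinv (aU : U ≃ₗ[k] U) (aW : W ≃ₗ[k] W) :
    U ⊗[k] (V ⊗[k] W) →ₗ[k] (U ⊗[k] V) ⊗[k] W :=
  (TensorProduct.assoc k U V W).symm.toLinearMap ∘ₗ
    TensorProduct.map aU.toLinearMap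
      (TensorProduct.map (LinearMap.id : V →ₗ[k] V) aW.symm.toLinearMap)

end Assoc

section HomLongEq

variable {k M : Type*} [Field k] [AddCommGroup M] [Module k M]

/-- `F¹² = F ⊗ μ` on `M ⊗ (M ⊗ M)`. -/
noncomputable def f12 (μ : M ≃ₗ[k] M) (F : M ⊗[k] M →ₗ[k] M ⊗[k] M) :
    M ⊗[k] (M ⊗[k] M) →ₗ[k] M ⊗[k] (M ⊗[k] M) :=
  (TensorProduct.assoc k M M M).toLinearMap ∘ₗ
    TensorProduct.map F μ.toLinearMap ∘ₗ
    (TensorProduct.assoc k M M M).symm.toLinearMap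

/-- `F²³ = μ ⊗ F` on `M ⊗ (M ⊗ M)`. -/
noncomputable def f23 (μ : M ≃ₗ[k] M) (F : M ⊗[k] M →ₗ[k] M ⊗[k] M) :
    M ⊗[k] (M ⊗[k] M) →ₗ[k] M ⊗[k] (M ⊗[k] M) :=
  TensorProduct.map μ.toLinearMap F

/-- `F¹³ = (id ⊗ τ) ∘ (F ⊗ μ) ∘ (id ⊗ τ)` on `M ⊗ (M ⊗ M)`. -/
noncomputable def f13 (μ : M ≃ₗ[k] M) (F : M ⊗[k] M →ₗ[k] M ⊗[k] M) :
    M ⊗[k] (M ⊗[k] M) →ₗ[k] M ⊗[k] (M ⊗[k] M) :=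
  TensorProduct.map (LinearMap.id : M →ₗ[k] M) (TensorProduct.comm k M M).toLinearMap ∘ₗ
    f12 μ F ∘ₗ
    TensorProduct.map (LinearMap.id : M →ₗ[k] M) (TensorProduct.comm k M M).toLinearMap

/-- The cyclic permutation `τ⁽¹²³⁾ : x ⊗ y ⊗ z ↦ z ⊗ x ⊗ y`. -/
noncomputable def cyc123 (k M : Type*) [Field k] [AddCommGroup M] [Module k M] :
    M ⊗[k] (M ⊗[k] M) →ₗ[k] M ⊗[k] (M ⊗[k] M) :=
  (TensorProduct.comm k (M ⊗[k] M) M).toLinearMap ∘ₗ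
    (TensorProduct.assoc k M M M).symm.toLinearMap

end HomLongEq

/-- The inverse Long braiding
`D(n ⊗ m) = ⟨S_B⁻¹(m₋₁)|n₋₁⟩ S_H(R¹)·μ⁻²(m₀) ⊗ R²·ν⁻²(n₀)`. -/
noncomputable def braidLinv {k H B M N : Type*} [Field k]
    [AddCommGroup H] [Module k H] [AddCommGroup B] [Module k B]
    [AddCommGroup M] [Module k M] [AddCommGroup N] [Module k N]
    (R : H ⊗[k] H) (antipodeH : H →ₗ[k] H)
    (form : B →ₗ[k] B →ₗ[k] k) (SBinv : B →ₗ[k] B)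
    (actM : H →ₗ[k] M →ₗ[k] M) (actN : H →ₗ[k] N →ₗ[k] N)
    (coactM : M →ₗ[k] B ⊗[k] M) (coactN : N →ₗ[k] B ⊗[k] N)
    (aM : M ≃ₗ[k] M) (aN : N ≃ₗ[k] N) : N ⊗[k] M →ₗ[k] M ⊗[k] N :=
  TensorProduct.map (TensorProduct.lift actM) (TensorProduct.lift actN) ∘ₗ
    (TensorProduct.tensorTensorTensorComm k H H M N).toLinearMap ∘ₗ
    TensorProduct.mk k (H ⊗[k] H) (M ⊗[k] N)
      (TensorProduct.map antipodeH (LinearMap.id : H →ₗ[k] H) R) ∘ₗ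
    (TensorProduct.comm k N M).toLinearMap ∘ₗ
    TensorProduct.map (aN.symm.toLinearMap ∘ₗ aN.symm.toLinearMap)
      (aM.symm.toLinearMap ∘ₗ aM.symm.toLinearMap) ∘ₗ
    (TensorProduct.lid k (N ⊗[k] M)).toLinearMap ∘ₗ
    TensorProduct.map
      (TensorProduct.lift form ∘ₗ (TensorProduct.comm k B B).toLinearMap ∘ₗ
        TensorProduct.map (LinearMap.id : B →ₗ[k] B) SBinv)
      (LinearMap.id : N ⊗[k] M →ₗ[k] N ⊗[k] M) ∘ₗ
    (TensorProduct.tensorTensorTensorComm k B N B M).toLinearMap ∘ₗ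
    TensorProduct.map coactN coactM

/-! ### The antipode of a Hom-Hopf algebra -/

namespace HomHopf
variable {k H : Type*} [Field k] [AddCommGroup H] [Module k H]

theorem comul_auto_symm (HA : HomBialgebra k H) (h : H) :
    HA.comul (HA.auto.symm h)
      = TensorProduct.map HA.auto.symm.toLinearMap HA.auto.symm.toLinearMap (HA.comul h) := by
  obtain ⟨h, rfl⟩ := HA.auto.surjective h
  rw [HA.comul_auto, ← LinearMap.comp_apply, ← TensorProduct.map_comp]
  simp

/-- The ordinary ring obtained from a Hom-bialgebra by untwisting the product:
`a * b = α⁻¹(ab)`, with the same addition and unit. -/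
@[reducible] def untwistRing (HA : HomBialgebra k H) : Ring H :=
  { (inferInstance : AddCommGroup H) with
    mul := fun a b => HA.auto.symm (HA.mul a b)
    one := HA.one
    left_distrib := fun a b c => by
      change HA.auto.symm (HA.mul a (b + c)) = HA.auto.symm (HA.mul a b) + HA.auto.symm (HA.mul a c)
      simp
    right_distrib := fun a b c => by
      change HA.auto.symm (HA.mul (a + b) c) = HA.auto.symm (HA.mul a c) + HA.auto.symm (HA.mul b c)
      simp
    zero_mul := fun a => by
      change HA.auto.symm (HA.mul 0 a) = 0
      simp
    mul_zero := fun a => by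
      change HA.auto.symm (HA.mul a 0) = 0
      simp
    mul_assoc := fun a b c => by
      change HA.auto.symm (HA.mul (HA.auto.symm (HA.mul a b)) c)
        = HA.auto.symm (HA.mul a (HA.auto.symm (HA.mul b c)))
      apply HA.auto.injective
      apply HA.auto.injective
      simp [HA.auto_mul, HA.hom_assoc]
    one_mul := fun a => by
      change HA.auto.symm (HA.mul HA.one a) = a
      simp [HA.one_mul']
    mul_one := fun a => by
      change HA.auto.symm (HA.mul a HA.one) = a
      simp [HA.mul_one'] }

/-- The antipode is anti-multiplicative. The product `α⁻¹ ∘ mul` and the coproduct `comul ∘ α⁻¹`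
make `H` an ordinary Hopf algebra with the same antipode, where this is known. -/
theorem antipode_mul (HH : HomHopf k H) (a b : H) :
    HH.antipode (HH.mul a b) = HH.mul (HH.antipode b) (HH.antipode a) := by
  let _ : Ring H := untwistRing HH.toHomBialgebra
  have hmul : ∀ x y : H, x * y = HH.auto.symm (HH.mul x y) := fun _ _ => rfl
  have hone : (1 : H) = HH.one := rfl
  let _ : Algebra k H := Algebra.ofModule
    (fun r x y => by simp [hmul]) (fun r x y => by simp [hmul])
  let _ : Coalgebra k H :=
    { comul := HH.comul ∘ₗ HH.auto.symm.toLinearMap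
      counit := HH.counit
      coassoc := by
        ext h
        have e := HH.hom_coassoc (HH.auto.symm (HH.auto.symm h))
        rw [comul_auto_symm] at e
        simp only [LinearMap.comp_apply, LinearEquiv.coe_coe, LinearMap.rTensor, LinearMap.lTensor]
        generalize HH.comul (HH.auto.symm h) = u at e ⊢
        rw [← LinearMap.comp_apply, ← TensorProduct.map_comp,
          ← LinearMap.comp_apply (TensorProduct.map HH.comul _), ← TensorProduct.map_comp] at e
        simpa using e.symm
      rTensor_counit_comp_comul := by
        ext h
        apply (TensorProduct.lid k H).injective
        simpa [LinearMap.rTensor] using HH.counit_comul (HH.auto.symm h)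
      lTensor_counit_comp_comul := by
        ext h
        apply (TensorProduct.rid k H).injective
        simpa [LinearMap.lTensor] using HH.comul_counit (HH.auto.symm h) }
  have hcomul : ∀ x : H, Coalgebra.comul (R := k) x = HH.comul (HH.auto.symm x) := fun _ => rfl
  have hcounit : ∀ x : H, Coalgebra.counit (R := k) x = HH.counit x := fun _ => rfl
  let _ : Bialgebra k H := Bialgebra.mk' k H HH.counit_one
    (fun {x y} => by
      rw [hmul, hcounit, hcounit, hcounit, ← HH.counit_mul, ← HH.counit_auto]; simp)
    (by rw [hcomul, hone, HH.auto.symm_apply_eq.2 HH.auto_one.symm, HH.comul_one]; rfl)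
    (fun {x y} => by
      obtain ⟨x, rfl⟩ := HH.auto.surjective x
      obtain ⟨y, rfl⟩ := HH.auto.surjective y
      rw [hcomul, hcomul, hcomul, hmul, ← HH.auto_mul]
      simp only [LinearEquiv.symm_apply_apply]
      rw [comul_auto_symm, HH.comul_mul]
      generalize HH.comul x = u
      generalize HH.comul y = v
      induction u with
      | zero => simp
      | add u₁ u₂ h₁ h₂ => simp only [TensorProduct.add_tmul, map_add, add_mul, h₁, h₂]
      | tmul a b =>
        induction v with
        | zero => simp
        | add v₁ v₂ h₁ h₂ => simp only [TensorProduct.tmul_add, map_add, mul_add, h₁, h₂]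
        | tmul c d => simp [hmul])
  have hmul' : ∀ u : H ⊗[k] H,
      LinearMap.mul' k H u = HH.auto.symm (TensorProduct.lift HH.mul u) := fun u => by
    induction u with
    | zero => simp
    | add u v hu hv => simp only [map_add, hu, hv]
    | tmul a b => simp [hmul]
  have hinv : HH.auto.symm HH.one = HH.one := HH.auto.symm_apply_eq.2 HH.auto_one.symm
  have hcinv : ∀ x, HH.counit (HH.auto.symm x) = HH.counit x := fun x => by
    rw [← HH.counit_auto]; simp
  let _ : HopfAlgebra k H :=
    { antipode := HH.antipode
      mul_antipode_rTensor_comul := by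
        ext h
        have e := HH.antipode_left (HH.auto.symm h)
        simp only [LinearMap.comp_apply, hmul', hcomul, Algebra.linearMap_apply, hcounit,
          Algebra.algebraMap_eq_smul_one, hone, LinearMap.rTensor]
        rw [e, map_smul, hinv, hcinv]
      mul_antipode_lTensor_comul := by
        ext h
        have e := HH.antipode_right (HH.auto.symm h)
        simp only [LinearMap.comp_apply, hmul', hcomul, Algebra.linearMap_apply, hcounit,
          Algebra.algebraMap_eq_smul_one, hone, LinearMap.lTensor]
        rw [e, map_smul, hinv, hcinv] }
  have := HopfAlgebra.antipode_mul_antidistrib (R := k) a b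
  change HH.antipode (HH.auto.symm (HH.mul a b))
    = HH.auto.symm (HH.mul (HH.antipode b) (HH.antipode a)) at this
  rw [LinearEquiv.eq_symm_apply, ← HH.antipode_auto] at this
  simpa using this

theorem antipode_one (HH : HomHopf k H) : HH.antipode HH.one = HH.one := by
  have e := HH.antipode_left HH.one
  rw [HH.comul_one, HH.counit_one] at e
  simp only [TensorProduct.map_tmul, TensorProduct.lift.tmul, LinearMap.id_apply, HH.mul_one',
    one_smul] at e
  apply HH.auto.injective
  rw [e, HH.auto_one]

end HomHopf

/-! ### The operators on `M ⊗ N` attached to elements of `H ⊗ H` and forms on `B ⊗ B` -/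

section Operators

variable {k H B M N : Type*} [Field k]
variable [AddCommGroup H] [Module k H] [AddCommGroup B] [Module k B]
variable [AddCommGroup M] [Module k M] [AddCommGroup N] [Module k N]
variable {HA : HomBialgebra k H} {BA : HomBialgebra k B}

/-- The operator `m ⊗ n ↦ X¹ · μ⁻²(m) ⊗ X² · ν⁻²(n)` attached to `X ∈ H ⊗ H`. -/
noncomputable def actOp (LM : LongDimodule HA BA M) (LN : LongDimodule HA BA N) (X : H ⊗[k] H) :
    M ⊗[k] N →ₗ[k] M ⊗[k] N :=
  TensorProduct.map (TensorProduct.lift LM.act) (TensorProduct.lift LN.act) ∘ₗ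
    (TensorProduct.tensorTensorTensorComm k H H M N).toLinearMap ∘ₗ
    TensorProduct.mk k (H ⊗[k] H) (M ⊗[k] N) X ∘ₗ
    TensorProduct.map (LM.auto.trans LM.auto).symm.toLinearMap
      (LN.auto.trans LN.auto).symm.toLinearMap

/-- The operator `m ⊗ n ↦ φ(m₋₁ ⊗ n₋₁) m₀ ⊗ n₀` attached to a linear form `φ` on `B ⊗ B`. -/
noncomputable def coactOp (LM : LongDimodule HA BA M) (LN : LongDimodule HA BA N)
    (φ : B ⊗[k] B →ₗ[k] k) : M ⊗[k] N →ₗ[k] M ⊗[k] N :=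
  (TensorProduct.lid k (M ⊗[k] N)).toLinearMap ∘ₗ
    TensorProduct.map φ (LinearMap.id : M ⊗[k] N →ₗ[k] M ⊗[k] N) ∘ₗ
    (TensorProduct.tensorTensorTensorComm k B M B N).toLinearMap ∘ₗ
    TensorProduct.map LM.coact LN.coact

variable (LM : LongDimodule HA BA M) (LN : LongDimodule HA BA N)

theorem actOp_tmul (a b : H) (m : M) (n : N) :
    actOp LM LN (a ⊗ₜ b) (m ⊗ₜ n) =
      LM.act a (LM.auto.symm (LM.auto.symm m)) ⊗ₜ LN.act b (LN.auto.symm (LN.auto.symm n)) := by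
  simp [actOp]

theorem actOp_zero : actOp LM LN (0 : H ⊗[k] H) = 0 := by
  ext m n
  simp [actOp]

theorem actOp_add (X Y : H ⊗[k] H) : actOp LM LN (X + Y) = actOp LM LN X + actOp LM LN Y := by
  ext m n
  simp [actOp]

/-- `braidL` is the composite of the operators given by the form and by `R`, followed by the flip. -/
theorem braidL_eq (R : H ⊗[k] H) (form : B →ₗ[k] B →ₗ[k] k) :
    braidL R form LM.act LN.act LM.coact LN.coact LM.auto LN.auto =
      (TensorProduct.comm k M N).toLinearMap ∘ₗ actOp LM LN R ∘ₗ
        coactOp LM LN (TensorProduct.lift form) := by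
  have key : braidQT R LM.act LN.act (LM.auto.trans LM.auto) (LN.auto.trans LN.auto) =
      (TensorProduct.comm k M N).toLinearMap ∘ₗ actOp LM LN R := by
    ext m n
    simp only [braidQT, actOp]
    induction R with
    | zero => simp
    | add X Y hX hY =>
      simp only [TensorProduct.AlgebraTensorModule.curry_apply, TensorProduct.curry_apply,
        LinearMap.restrictScalars_self, LinearMap.comp_apply, map_add, LinearMap.add_apply] at hX hY ⊢
      rw [hX, hY]
    | tmul a b => simp
  rw [braidL, key]
  rfl

theorem braidLinv_eq (R : H ⊗[k] H) (S : H →ₗ[k] H) (form : B →ₗ[k] B →ₗ[k] k) (T : B →ₗ[k] B) :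
    braidLinv R S form T LM.act LN.act LM.coact LN.coact LM.auto LN.auto =
      actOp LM LN (TensorProduct.map S LinearMap.id R) ∘ₗ
        coactOp LM LN (TensorProduct.lift (form ∘ₗ T)) ∘ₗ
          (TensorProduct.comm k N M).toLinearMap := by
  ext n m
  simp only [braidLinv, actOp, coactOp, TensorProduct.AlgebraTensorModule.curry_apply,
    TensorProduct.curry_apply, LinearMap.restrictScalars_self, LinearMap.comp_apply,
    TensorProduct.map_tmul, LinearEquiv.coe_coe, TensorProduct.comm_tmul]
  congr 3
  generalize LM.coact m = u
  generalize LN.coact n = v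
  induction u with
  | zero => simp
  | add u₁ u₂ h₁ h₂ => simp only [TensorProduct.add_tmul, TensorProduct.tmul_add, map_add, h₁, h₂]
  | tmul a b =>
    induction v with
    | zero => simp
    | add v₁ v₂ h₁ h₂ => simp only [TensorProduct.add_tmul, TensorProduct.tmul_add, map_add, h₁, h₂]
    | tmul c d => simp

theorem coact_auto_symm (m : M) : LM.coact (LM.auto.symm m) =
    TensorProduct.map BA.auto.symm.toLinearMap LM.auto.symm.toLinearMap (LM.coact m) := by
  obtain ⟨m, rfl⟩ := LM.auto.surjective m
  rw [LM.coact_auto, ← LinearMap.comp_apply, ← TensorProduct.map_comp]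
  simp

/-- An `α`-invariant `X` and a `β`-invariant `φ` give commuting operators; this is where the Long
compatibility `ρ(h · m) = β(m₋₁) ⊗ α(h) · m₀` enters. -/
theorem coactOp_comp_actOp (X : H ⊗[k] H) (φ : B ⊗[k] B →ₗ[k] k)
    (hX : TensorProduct.map HA.auto.toLinearMap HA.auto.toLinearMap X = X)
    (hφ : ∀ a b, φ (BA.auto a ⊗ₜ BA.auto b) = φ (a ⊗ₜ b)) :
    coactOp LM LN φ ∘ₗ actOp LM LN X = actOp LM LN X ∘ₗ coactOp LM LN φ := by
  have hφ' : ∀ a b, φ (BA.auto.symm a ⊗ₜ BA.auto.symm b) = φ (a ⊗ₜ b) := fun a b => by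
    rw [← hφ]; simp
  have key : coactOp LM LN φ ∘ₗ actOp LM LN X =
      actOp LM LN (TensorProduct.map HA.auto.toLinearMap HA.auto.toLinearMap X) ∘ₗ
        coactOp LM LN φ := by
    clear hX
    induction X with
    | zero => simp [actOp_zero]
    | add X Y hX hY => simp only [actOp_add, map_add, LinearMap.comp_add, LinearMap.add_comp, hX, hY]
    | tmul a b =>
      ext m n
      simp only [TensorProduct.AlgebraTensorModule.curry_apply, TensorProduct.curry_apply,
        LinearMap.restrictScalars_self, LinearMap.comp_apply, actOp_tmul, TensorProduct.map_tmul]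
      simp only [coactOp, LinearMap.comp_apply, TensorProduct.map_tmul, LM.compat, LN.compat,
        coact_auto_symm]
      generalize LM.coact m = u
      generalize LN.coact n = v
      induction u with
      | zero => simp
      | add u₁ u₂ h₁ h₂ => simp only [TensorProduct.add_tmul, map_add, h₁, h₂]
      | tmul c m =>
        induction v with
        | zero => simp
        | add v₁ v₂ h₁ h₂ => simp only [TensorProduct.tmul_add, map_add, h₁, h₂]
        | tmul d n => simp [hφ', actOp_tmul]
  rw [key, hX]

/-- The componentwise product `X¹Y¹ ⊗ X²Y²` on `H ⊗ H`. -/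
noncomputable def pairMul (HA : HomBialgebra k H) (X Y : H ⊗[k] H) : H ⊗[k] H :=
  TensorProduct.map (TensorProduct.lift HA.mul) (TensorProduct.lift HA.mul)
    (TensorProduct.tensorTensorTensorComm k H H H H (X ⊗ₜ[k] Y))

theorem act_act_symm (a c : H) (m : M) :
    LM.act (HA.auto a) (LM.auto.symm (LM.auto.symm (LM.act (HA.auto (HA.auto c)) m))) =
      LM.act (HA.mul a c) (LM.auto.symm m) := by
  obtain ⟨m, rfl⟩ := LM.auto.surjective m
  obtain ⟨m, rfl⟩ := LM.auto.surjective m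
  simp [← LM.auto_act, LM.act_act]

/-- `actOp` turns a pair of inverse `α`-invariant elements into operators whose composite is
`μ⁻² ⊗ ν⁻²`. -/
theorem actOp_comp_actOp (X Y : H ⊗[k] H)
    (hX : TensorProduct.map HA.auto.toLinearMap HA.auto.toLinearMap X = X)
    (hY : TensorProduct.map HA.auto.toLinearMap HA.auto.toLinearMap Y = Y)
    (hXY : pairMul HA X Y = HA.one ⊗ₜ HA.one) :
    actOp LM LN X ∘ₗ actOp LM LN Y = TensorProduct.map
      (LM.auto.trans LM.auto).symm.toLinearMap (LN.auto.trans LN.auto).symm.toLinearMap := by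
  have key : ∀ X Y : H ⊗[k] H,
      actOp LM LN (TensorProduct.map HA.auto.toLinearMap HA.auto.toLinearMap X) ∘ₗ
        actOp LM LN (TensorProduct.map HA.auto.toLinearMap HA.auto.toLinearMap
          (TensorProduct.map HA.auto.toLinearMap HA.auto.toLinearMap Y)) =
      actOp LM LN (pairMul HA X Y) ∘ₗ
        TensorProduct.map LM.auto.symm.toLinearMap LN.auto.symm.toLinearMap := by
    intro X Y
    induction X with
    | zero => simp [actOp_zero, pairMul]
    | add X X' hX hX' =>
      simp only [pairMul, TensorProduct.add_tmul, actOp_add, map_add, LinearMap.add_comp] at hX hX' ⊢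
      rw [hX, hX']
    | tmul a b =>
      induction Y with
      | zero => simp [actOp_zero, pairMul]
      | add Y Y' hY hY' =>
        simp only [pairMul, TensorProduct.tmul_add, actOp_add, map_add, LinearMap.add_comp,
          LinearMap.comp_add] at hY hY' ⊢
        rw [hY, hY']
      | tmul c d =>
        ext m n
        simp [actOp_tmul, pairMul, act_act_symm]
  have e := key X Y
  rw [hX, hY, hY, hXY] at e
  rw [e]
  ext m n
  simp [actOp_tmul, LM.one_act, LN.one_act]

/-- Convolution of two linear forms on `B ⊗ B`: `(φ * ψ)(b ⊗ c) = φ(b₁ ⊗ c₁) ψ(b₂ ⊗ c₂)`. -/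
noncomputable def pairConv (BA : HomBialgebra k B) (φ ψ : B ⊗[k] B →ₗ[k] k) (b c : B) : k :=
  LinearMap.mul' k k (TensorProduct.map φ ψ
    (TensorProduct.tensorTensorTensorComm k B B B B (BA.comul b ⊗ₜ[k] BA.comul c)))

/-- `coactOp` turns a pair of convolution-inverse `β`-invariant forms into operators whose composite
is `μ² ⊗ ν²`. -/
theorem coactOp_comp_coactOp (φ ψ : B ⊗[k] B →ₗ[k] k)
    (hφ : ∀ a b, φ (BA.auto a ⊗ₜ BA.auto b) = φ (a ⊗ₜ b))
    (hφψ : ∀ b c, pairConv BA φ ψ b c = BA.counit b * BA.counit c) :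
    coactOp LM LN ψ ∘ₗ coactOp LM LN φ = TensorProduct.map
      (LM.auto.trans LM.auto).toLinearMap (LN.auto.trans LN.auto).toLinearMap := by
  -- `W` contracts the first legs by `φ` and the second ones by `ψ`.
  let W : (B ⊗[k] (B ⊗[k] M)) ⊗[k] (B ⊗[k] (B ⊗[k] N)) →ₗ[k] M ⊗[k] N :=
    (TensorProduct.lid k (M ⊗[k] N)).toLinearMap ∘ₗ
      TensorProduct.map φ ((TensorProduct.lid k (M ⊗[k] N)).toLinearMap ∘ₗ
        TensorProduct.map ψ LinearMap.id ∘ₗ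
        (TensorProduct.tensorTensorTensorComm k B M B N).toLinearMap) ∘ₗ
      (TensorProduct.tensorTensorTensorComm k B (B ⊗[k] M) B (B ⊗[k] N)).toLinearMap
  have hW : ∀ (b c : B) (u : B ⊗[k] M) (v : B ⊗[k] N),
      W ((BA.auto b ⊗ₜ u) ⊗ₜ (BA.auto c ⊗ₜ v)) = W ((b ⊗ₜ u) ⊗ₜ (c ⊗ₜ v)) := by
    intro b c u v
    simp [W, hφ]
  ext m n
  have h1 : coactOp LM LN ψ (coactOp LM LN φ (m ⊗ₜ n)) =
      W (TensorProduct.map BA.auto.toLinearMap LM.coact (LM.coact m) ⊗ₜ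
        TensorProduct.map BA.auto.toLinearMap LN.coact (LN.coact n)) := by
    rw [coactOp, coactOp]
    simp only [LinearMap.comp_apply, TensorProduct.map_tmul]
    generalize LM.coact m = u
    generalize LN.coact n = v
    induction u with
    | zero => simp
    | add u₁ u₂ h₁ h₂ => simp only [TensorProduct.add_tmul, map_add, h₁, h₂]
    | tmul a b =>
      induction v with
      | zero => simp
      | add v₁ v₂ h₁ h₂ => simp only [TensorProduct.tmul_add, map_add, h₁, h₂]
      | tmul c d =>
        simp only [TensorProduct.map_tmul, LinearEquiv.coe_coe, hW]
        simp [W]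
  have h2 : ∀ (b c : B) (m : M) (n : N),
      W (TensorProduct.assoc k B B M (BA.comul b ⊗ₜ m) ⊗ₜ
        TensorProduct.assoc k B B N (BA.comul c ⊗ₜ n)) = pairConv BA φ ψ b c • m ⊗ₜ n := by
    intro b c m n
    rw [pairConv]
    generalize BA.comul b = u
    generalize BA.comul c = v
    induction u with
    | zero => simp
    | add u₁ u₂ h₁ h₂ => simp only [TensorProduct.add_tmul, map_add, h₁, h₂, add_smul]
    | tmul a b =>
      induction v with
      | zero => simp
      | add v₁ v₂ h₁ h₂ =>
        simp only [TensorProduct.tmul_add, TensorProduct.add_tmul, map_add, h₁, h₂, add_smul]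
      | tmul c d => simp [W, mul_smul, smul_comm (φ _)]
  have h3 : W (TensorProduct.assoc k B B M
        (TensorProduct.map BA.comul LM.auto.toLinearMap (LM.coact m)) ⊗ₜ
      TensorProduct.assoc k B B N
        (TensorProduct.map BA.comul LN.auto.toLinearMap (LN.coact n))) =
      LM.auto (TensorProduct.lid k M (TensorProduct.map BA.counit LinearMap.id (LM.coact m))) ⊗ₜ
      LN.auto (TensorProduct.lid k N (TensorProduct.map BA.counit LinearMap.id (LN.coact n))) := by
    generalize LM.coact m = u
    generalize LN.coact n = v
    induction u with
    | zero => simp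
    | add u₁ u₂ h₁ h₂ => simp only [TensorProduct.add_tmul, map_add, h₁, h₂]
    | tmul a b =>
      induction v with
      | zero => simp
      | add v₁ v₂ h₁ h₂ => simp only [TensorProduct.tmul_add, map_add, h₁, h₂]
      | tmul c d =>
        rw [TensorProduct.map_tmul, TensorProduct.map_tmul, h2, hφψ]
        simp [mul_comm (BA.counit a), mul_smul, TensorProduct.smul_tmul']
  rw [LM.counit_coact, LN.counit_coact, ← LM.hom_coassoc, ← LN.hom_coassoc, ← h1] at h3
  simpa using h3

end Operators

/-! ### Invertibility of the R-matrix -/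

section RMatrix

variable {k H : Type*} [Field k] [AddCommGroup H] [Module k H] (HQ : QTHomHopf k H)

theorem map_auto_map_antipode : TensorProduct.map HQ.auto.toLinearMap HQ.auto.toLinearMap
    (TensorProduct.map HQ.antipode LinearMap.id HQ.R) =
      TensorProduct.map HQ.antipode LinearMap.id HQ.R := by
  conv_rhs => rw [← HQ.qha5]
  generalize HQ.R = X
  induction X with
  | zero => simp
  | add X Y hX hY => simp only [map_add, hX, hY]
  | tmul a b => simp [HQ.antipode_auto]

/-- If `F : H ⊗ H → H` satisfies `F(h₁ ⊗ h₂) = ε(h) 1`, then applying `F` to the first two legs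
collapses `R¹₁ ⊗ R¹₂ ⊗ α(R²)` to `1 ⊗ 1`. -/
theorem collapse_comul_R (F : H ⊗[k] H →ₗ[k] H)
    (hF : ∀ h, F (HQ.comul h) = HQ.counit h • HQ.one) :
    TensorProduct.map F LinearMap.id (TensorProduct.map HQ.comul HQ.auto.toLinearMap HQ.R) =
      HQ.one ⊗ₜ HQ.one := by
  have key : ∀ X : H ⊗[k] H,
      TensorProduct.map F LinearMap.id (TensorProduct.map HQ.comul HQ.auto.toLinearMap X) =
        HQ.one ⊗ₜ HQ.auto
          (TensorProduct.lid k H (TensorProduct.map HQ.counit LinearMap.id X)) := fun X => by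
    induction X with
    | zero => simp
    | add X Y hX hY => simp only [map_add, hX, hY, TensorProduct.tmul_add]
    | tmul a b => simp [hF, TensorProduct.smul_tmul]
  rw [key, HQ.qha1a, HQ.auto_one]

theorem map_auto_symm_one : TensorProduct.map HQ.auto.symm.toLinearMap
    (LinearMap.id : H →ₗ[k] H) (HQ.one ⊗ₜ HQ.one) = HQ.one ⊗ₜ HQ.one := by
  simp [HQ.auto.symm_apply_eq.2 HQ.auto_one.symm]

/-- The right-hand side of the hexagon axiom for `(Δ ⊗ id) R`, contracted by
multiplication after applying `T₁` and `T₂` to the first two legs, is, up to `α` on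
the first leg, a product in `H ⊗ H`. -/
theorem pairMul_map_map (T₁ T₂ : H →ₗ[k] H) (h₁ : ∀ h, T₁ (HQ.auto h) = HQ.auto (T₁ h))
    (h₂ : ∀ h, T₂ (HQ.auto h) = HQ.auto (T₂ h)) (X Y : H ⊗[k] H) :
    pairMul HQ.toHomBialgebra (TensorProduct.map T₁ LinearMap.id X)
        (TensorProduct.map T₂ LinearMap.id Y) =
      TensorProduct.map HQ.auto.symm.toLinearMap LinearMap.id
        (TensorProduct.map (TensorProduct.lift HQ.mul ∘ₗ TensorProduct.map T₁ T₂) LinearMap.id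
          (TensorProduct.map (TensorProduct.map HQ.auto.toLinearMap HQ.auto.toLinearMap)
            (TensorProduct.lift HQ.mul)
            (TensorProduct.tensorTensorTensorComm k H H H H (X ⊗ₜ[k] Y)))) := by
  rw [pairMul]
  induction X with
  | zero => simp
  | add X X' hX hX' => simp only [TensorProduct.add_tmul, map_add, hX, hX']
  | tmul a b =>
    induction Y with
    | zero => simp
    | add Y Y' hY hY' => simp only [TensorProduct.tmul_add, map_add, hY, hY']
    | tmul c d => simp [h₁, h₂, ← HQ.auto_mul]

/-- `S(R¹)r¹ ⊗ R²r² = 1 ⊗ 1`. -/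
theorem pairMul_antipode_R :
    pairMul HQ.toHomBialgebra (TensorProduct.map HQ.antipode LinearMap.id HQ.R) HQ.R =
      HQ.one ⊗ₜ HQ.one := by
  have e := pairMul_map_map HQ HQ.antipode LinearMap.id HQ.antipode_auto (fun _ => rfl) HQ.R HQ.R
  rwa [← HQ.qha2, collapse_comul_R HQ _ HQ.antipode_left, map_auto_symm_one,
    TensorProduct.map_id, LinearMap.id_apply] at e

/-- `R¹S(r¹) ⊗ R²r² = 1 ⊗ 1`. -/
theorem pairMul_R_antipode :
    pairMul HQ.toHomBialgebra HQ.R (TensorProduct.map HQ.antipode LinearMap.id HQ.R) =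
      HQ.one ⊗ₜ HQ.one := by
  have e := pairMul_map_map HQ LinearMap.id HQ.antipode (fun _ => rfl) HQ.antipode_auto HQ.R HQ.R
  rwa [← HQ.qha2, collapse_comul_R HQ _ HQ.antipode_right, map_auto_symm_one,
    TensorProduct.map_id, LinearMap.id_apply] at e

end RMatrix

/-! ### Convolution invertibility of the form -/

section Form

variable {k B : Type*} [Field k] [AddCommGroup B] [Module k B] (BC : CQTHomHopf k B)

theorem form_mul_auto_auto (h g l : B) : LinearMap.mul' k k
    (TensorProduct.map (BC.form g) (BC.form h) (BC.comul l)) =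
      BC.form (BC.mul h g) (BC.auto (BC.auto l)) := by
  obtain ⟨h, rfl⟩ := BC.auto.surjective h
  obtain ⟨g, rfl⟩ := BC.auto.surjective g
  rw [← BC.cha1, ← BC.auto_mul, BC.cha5]

/-- The first coquasitriangularity axiom as a convolution identity:
`⟨T₁(b₁)|c₁⟩⟨T₂(b₂)|c₂⟩ = ⟨T₂(b₂) T₁(b₁)|β²(c)⟩`. -/
theorem pairConv_form (T₁ T₂ : B →ₗ[k] B) (b c : B) :
    pairConv BC.toHomBialgebra (TensorProduct.lift (BC.form ∘ₗ T₁))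
        (TensorProduct.lift (BC.form ∘ₗ T₂)) b c =
      BC.form (TensorProduct.lift BC.mul (TensorProduct.comm k B B
        (TensorProduct.map T₁ T₂ (BC.comul b)))) (BC.auto (BC.auto c)) := by
  rw [pairConv]
  generalize BC.comul b = u
  induction u with
  | zero => simp
  | add u₁ u₂ h₁ h₂ => simp only [TensorProduct.add_tmul, map_add, LinearMap.add_apply, h₁, h₂]
  | tmul x y =>
    simp only [TensorProduct.map_tmul, TensorProduct.comm_tmul, TensorProduct.lift.tmul]
    rw [← form_mul_auto_auto]
    generalize BC.comul c = v
    induction v with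
    | zero => simp
    | add v₁ v₂ h₁ h₂ => simp only [TensorProduct.tmul_add, map_add, h₁, h₂]
    | tmul c d => simp

variable (SB : B ≃ₗ[k] B)

theorem SB_apply (hSB : SB.toLinearMap = BC.antipode) (b : B) :
    SB b = BC.antipode b := by rw [← hSB]; rfl

/-- `S⁻¹(b₂) b₁ = ε(b) 1`, obtained by applying `S`. -/
theorem antipode_symm_left (hSB : SB.toLinearMap = BC.antipode) (b : B) :
    TensorProduct.lift BC.mul (TensorProduct.comm k B B
    (TensorProduct.map LinearMap.id SB.symm.toLinearMap (BC.comul b))) =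
      BC.counit b • BC.one := by
  have hS := SB_apply BC SB hSB
  apply SB.injective
  rw [map_smul, hS BC.one, HomHopf.antipode_one, ← BC.antipode_left]
  generalize BC.comul b = u
  induction u with
  | zero => simp
  | add u₁ u₂ h₁ h₂ => simp only [map_add, h₁, h₂]
  | tmul x y =>
    simp only [TensorProduct.map_tmul, TensorProduct.comm_tmul, TensorProduct.lift.tmul,
      LinearMap.id_apply, LinearEquiv.coe_coe]
    rw [hS, HomHopf.antipode_mul, ← hS (SB.symm y), SB.apply_symm_apply]

/-- `b₂ S⁻¹(b₁) = ε(b) 1`, obtained by applying `S`. -/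
theorem antipode_symm_right (hSB : SB.toLinearMap = BC.antipode) (b : B) :
    TensorProduct.lift BC.mul (TensorProduct.comm k B B
    (TensorProduct.map SB.symm.toLinearMap LinearMap.id (BC.comul b))) =
      BC.counit b • BC.one := by
  have hS := SB_apply BC SB hSB
  apply SB.injective
  rw [map_smul, hS BC.one, HomHopf.antipode_one, ← BC.antipode_right]
  generalize BC.comul b = u
  induction u with
  | zero => simp
  | add u₁ u₂ h₁ h₂ => simp only [map_add, h₁, h₂]
  | tmul x y =>
    simp only [TensorProduct.map_tmul, TensorProduct.comm_tmul, TensorProduct.lift.tmul,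
      LinearMap.id_apply, LinearEquiv.coe_coe]
    rw [hS, HomHopf.antipode_mul, ← hS (SB.symm x), SB.apply_symm_apply]

theorem SB_symm_auto (hSB : SB.toLinearMap = BC.antipode) (b : B) :
    SB.symm (BC.auto b) = BC.auto (SB.symm b) := by
  rw [SB.symm_apply_eq, SB_apply BC SB hSB, BC.antipode_auto, ← SB_apply BC SB hSB,
    SB.apply_symm_apply]

theorem pairConv_form_symm (hSB : SB.toLinearMap = BC.antipode) (b c : B) :
    pairConv BC.toHomBialgebra (TensorProduct.lift BC.form)
      (TensorProduct.lift (BC.form ∘ₗ SB.symm.toLinearMap)) b c = BC.counit b * BC.counit c := by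
  have e := pairConv_form BC LinearMap.id SB.symm.toLinearMap b c
  rw [LinearMap.comp_id, antipode_symm_left BC SB hSB] at e
  simpa [BC.cha4a, BC.counit_auto] using e

theorem pairConv_symm_form (hSB : SB.toLinearMap = BC.antipode) (b c : B) :
    pairConv BC.toHomBialgebra (TensorProduct.lift (BC.form ∘ₗ SB.symm.toLinearMap))
      (TensorProduct.lift BC.form) b c = BC.counit b * BC.counit c := by
  have e := pairConv_form BC SB.symm.toLinearMap LinearMap.id b c
  rw [LinearMap.comp_id, antipode_symm_right BC SB hSB] at e
  simpa [BC.cha4a, BC.counit_auto] using e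

end Form

/-- the Long braiding `C` is a linear isomorphism with inverse `D`. -/
theorem braid_isIso
    {k H B M N : Type*} [Field k]
    [AddCommGroup H] [Module k H] [AddCommGroup B] [Module k B]
    [AddCommGroup M] [Module k M] [AddCommGroup N] [Module k N]
    (HQ : QTHomHopf k H) (BC : CQTHomHopf k B)
    (SB : B ≃ₗ[k] B) (hSB : SB.toLinearMap = BC.antipode)
    (LM : LongDimodule HQ.toHomBialgebra BC.toHomBialgebra M)
    (LN : LongDimodule HQ.toHomBialgebra BC.toHomBialgebra N) :
    braidLinv HQ.R HQ.antipode BC.form SB.symm.toLinearMap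
          LM.act LN.act LM.coact LN.coact LM.auto LN.auto ∘ₗ
        braidL HQ.R BC.form LM.act LN.act LM.coact LN.coact LM.auto LN.auto
      = LinearMap.id ∧
    braidL HQ.R BC.form LM.act LN.act LM.coact LN.coact LM.auto LN.auto ∘ₗ
        braidLinv HQ.R HQ.antipode BC.form SB.symm.toLinearMap
          LM.act LN.act LM.coact LN.coact LM.auto LN.auto
      = LinearMap.id := by
  rw [braidL_eq, braidLinv_eq]
  have hφ : ∀ a b : B, TensorProduct.lift BC.form (BC.auto a ⊗ₜ BC.auto b) =
      TensorProduct.lift BC.form (a ⊗ₜ b) := fun a b => by simp [BC.cha5]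
  have hψ : ∀ a b : B,
      TensorProduct.lift (BC.form ∘ₗ SB.symm.toLinearMap) (BC.auto a ⊗ₜ BC.auto b) =
      TensorProduct.lift (BC.form ∘ₗ SB.symm.toLinearMap) (a ⊗ₜ b) := fun a b => by
    simp [SB_symm_auto BC SB hSB, BC.cha5]
  have hR := HQ.qha5
  have hR' := map_auto_map_antipode HQ
  have hA := actOp_comp_actOp LM LN _ _ hR' hR (pairMul_antipode_R HQ)
  have hA' := actOp_comp_actOp LM LN _ _ hR hR' (pairMul_R_antipode HQ)
  have hP := coactOp_comp_coactOp LM LN _ _ hφ (pairConv_form_symm BC SB hSB)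
  have hP' := coactOp_comp_coactOp LM LN _ _ hψ (pairConv_symm_form BC SB hSB)
  have hPA := coactOp_comp_actOp LM LN _ _ hR hψ
  have hPA' := coactOp_comp_actOp LM LN _ _ hR' hφ
  have hcancel : TensorProduct.map
        (LM.auto.trans LM.auto).symm.toLinearMap (LN.auto.trans LN.auto).symm.toLinearMap ∘ₗ
      TensorProduct.map
        (LM.auto.trans LM.auto).toLinearMap (LN.auto.trans LN.auto).toLinearMap =
      LinearMap.id := by
    ext m n
    simp
  constructor
  · refine LinearMap.ext fun x => ?_
    have e := LinearMap.congr_fun hcancel x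
    rw [← hA, ← hP] at e
    have e' := LinearMap.congr_fun hPA (coactOp LM LN (TensorProduct.lift BC.form) x)
    simp only [LinearMap.comp_apply] at e e'
    rw [← e'] at e
    simpa using e
  · refine LinearMap.ext fun x => ?_
    have e := LinearMap.congr_fun hcancel (TensorProduct.comm k N M x)
    rw [← hA', ← hP'] at e
    have e' := LinearMap.congr_fun hPA' (coactOp LM LN
      (TensorProduct.lift (BC.form ∘ₗ SB.symm.toLinearMap)) (TensorProduct.comm k N M x))
    simp only [LinearMap.comp_apply] at e e'
    rw [← e'] at e
    simpa using congrArg (TensorProduct.comm k M N) e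
end

section
/- Let (H,α,R) be a quasitriangular Hom-Hopf algebra, (B,β,⟨|⟩) a coquasitriangular Hom-Hopf algebra, and (U,μ_U),(V,ν_V),(W,ω_W) (H,B)-Hom-Long dimodules. With C_{M,N}(m⊗n)=⟨m₋₁|n₋₁⟩ R²·ν_N⁻²(n₀)⊗R¹·μ_M⁻²(m₀) (where V⊗W carries the tensor Long dimodule structure h·(v⊗w)=h₁·v⊗h₂·w, ρ(v⊗w)=β⁻²(v₋₁w₋₁)⊗(v₀⊗w₀) with automorphism ν_V⊗ω_W), and with associator a_{U,V,W}:(U⊗V)⊗W→U⊗(V⊗W), (u⊗v)⊗w↦μ_U⁻¹(u)⊗(v⊗ω_W(w)), the first hexagon identity holds: a_{V,W,U}∘C_{U,V⊗W}∘a_{U,V,W}=(id_V⊗C_{U,W})∘a_{V,U,W}∘(C_{U,V}⊗id_W) as linear maps (U⊗V)⊗W→V⊗(W⊗U). -/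
/-!
The hexagon splits into a statement about the form on `B` and one about `R`.

For a functional `φ` on `B`, let `contract φ` be the endomorphism `m ↦ φ(m₋₁) m₀` of a dimodule.
After writing `R`, `ρ(v)` and `ρ(w)` as finite sums of pure tensors (`braidL_tmul`), each side of
the hexagon at `(u ⊗ v) ⊗ w` becomes a sum, over the terms of `ρ(v)` and `ρ(w)`, of expressions in
which `u` occurs only through contractions.

* `contract_hexagon`: the contractions of `u` on the two sides agree. Hom-coassociativity turns the
  two successive contractions on the right into one contraction by a convolution product
  (`contract_contract`), and `⟨β(h)|gl⟩ = ⟨h₁|β(g)⟩⟨h₂|β(l)⟩` identifies this product with pairing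
  against `β⁻²(v₋₁ β(w₋₁))` (`form_flip_mul`). The dimodule compatibility (`contract_act`) lets the
  second contraction pass through the action of `R¹` created by the first braiding.
* `act_hexagon`: with equal contractions, the remaining identity involves only the actions. It
  follows from `α(R¹) ⊗ Δ(R²) = R¹r¹ ⊗ α(r²) ⊗ α(R²)`, Hom-associativity of the action on `U`, and
  the invariance `(α ⊗ α)(R) = R`, used once for each of the two copies of `R`.
-/

open TensorProduct

section HexagonHelpers

variable {k H B M N : Type*} [Field k]
variable [AddCommGroup H] [Module k H] [AddCommGroup B] [Module k B]
variable [AddCommGroup M] [Module k M] [AddCommGroup N] [Module k N]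

/-- The contraction of a coaction by a functional: `m ↦ φ(m₋₁) m₀`. -/
noncomputable def contract (coact : M →ₗ[k] B ⊗[k] M) (φ : B →ₗ[k] k) : M →ₗ[k] M :=
  (TensorProduct.lid k M).toLinearMap ∘ₗ
    TensorProduct.map φ (LinearMap.id : M →ₗ[k] M) ∘ₗ coact

theorem contract_auto {HA : HomBialgebra k H} {BA : HomBialgebra k B}
    (L : LongDimodule HA BA M) (φ : B →ₗ[k] k) (m : M) :
    contract L.coact φ (L.auto m)
      = L.auto (contract L.coact (φ ∘ₗ BA.auto.toLinearMap) m) := by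
  simp only [contract, LinearMap.comp_apply, L.coact_auto]
  induction L.coact m using TensorProduct.induction_on with
  | zero => simp
  | tmul x y => simp
  | add x y hx hy => simp only [map_add, hx, hy]

theorem contract_auto_symm {HA : HomBialgebra k H} {BA : HomBialgebra k B}
    (L : LongDimodule HA BA M) (φ : B →ₗ[k] k) (m : M) :
    contract L.coact (φ ∘ₗ BA.auto.toLinearMap) (L.auto.symm m)
      = L.auto.symm (contract L.coact φ m) := by
  rw [LinearEquiv.eq_symm_apply, ← contract_auto, LinearEquiv.apply_symm_apply]

theorem contract_act {HA : HomBialgebra k H} {BA : HomBialgebra k B}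
    (L : LongDimodule HA BA M) (φ : B →ₗ[k] k) (h : H) (m : M) :
    contract L.coact φ (L.act h m)
      = L.act (HA.auto h) (contract L.coact (φ ∘ₗ BA.auto.toLinearMap) m) := by
  simp only [contract, LinearMap.comp_apply, L.compat]
  induction L.coact m using TensorProduct.induction_on with
  | zero => simp
  | tmul x y => simp
  | add x y hx hy => simp only [map_add, hx, hy]

/-- Hom-coassociativity read through functionals: contracting twice is contracting once with the
convolution product of the functionals, up to the twists. -/
theorem contract_contract {HA : HomBialgebra k H} {BA : HomBialgebra k B}
    (L : LongDimodule HA BA M) (φ ψ : B →ₗ[k] k) (m : M) :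
    contract L.coact ψ (contract L.coact (φ ∘ₗ BA.auto.toLinearMap) m)
      = L.auto (contract L.coact
          (LinearMap.mul' k k ∘ₗ TensorProduct.map φ ψ ∘ₗ BA.comul) m) := by
  have key := congrArg (fun t => TensorProduct.lid k M (TensorProduct.map φ
    ((TensorProduct.lid k M).toLinearMap ∘ₗ
      TensorProduct.map ψ (LinearMap.id : M →ₗ[k] M)) t)) (L.hom_coassoc m)
  have h1 : ∀ t : B ⊗[k] M, TensorProduct.lid k M (TensorProduct.map φ
      ((TensorProduct.lid k M).toLinearMap ∘ₗ
        TensorProduct.map ψ (LinearMap.id : M →ₗ[k] M))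
        (TensorProduct.map BA.auto.toLinearMap L.coact t))
      = contract L.coact ψ (TensorProduct.lid k M
          (TensorProduct.map (φ ∘ₗ BA.auto.toLinearMap) (LinearMap.id : M →ₗ[k] M) t)) := by
    intro t
    induction t using TensorProduct.induction_on with
    | zero => simp
    | tmul x y => simp [contract]
    | add x y hx hy => simp only [map_add, hx, hy]
  have h3 : ∀ (s : B ⊗[k] B) (y : M), TensorProduct.lid k M (TensorProduct.map φ
      ((TensorProduct.lid k M).toLinearMap ∘ₗ
        TensorProduct.map ψ (LinearMap.id : M →ₗ[k] M))
        (TensorProduct.assoc k B B M (s ⊗ₜ[k] y)))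
      = LinearMap.mul' k k (TensorProduct.map φ ψ s) • y := by
    intro s y
    induction s using TensorProduct.induction_on with
    | zero => simp
    | tmul a b => simp [mul_smul, smul_comm (ψ b) (φ a)]
    | add a b ha hb => simp only [map_add, TensorProduct.add_tmul, ha, hb, add_smul]
  have h2 : ∀ t : B ⊗[k] M, TensorProduct.lid k M (TensorProduct.map φ
      ((TensorProduct.lid k M).toLinearMap ∘ₗ
        TensorProduct.map ψ (LinearMap.id : M →ₗ[k] M))
        (TensorProduct.assoc k B B M (TensorProduct.map BA.comul L.auto.toLinearMap t)))
      = L.auto (TensorProduct.lid k M (TensorProduct.map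
          (LinearMap.mul' k k ∘ₗ TensorProduct.map φ ψ ∘ₗ BA.comul)
          (LinearMap.id : M →ₗ[k] M) t)) := by
    intro t
    induction t using TensorProduct.induction_on with
    | zero => simp
    | tmul x y =>
      rw [TensorProduct.map_tmul, h3]
      simp
    | add x y hx hy => simp only [map_add, hx, hy]
  rw [h1, h2] at key
  exact key

/-- `⟨h|β⁻²(x β(y))⟩ = ⟨h₁|x⟩⟨h₂|β(y)⟩`. -/
theorem form_flip_mul (BC : CQTHomHopf k B) (x y : B) :
    BC.form.flip (BC.auto.symm (BC.auto.symm (BC.mul x (BC.auto y))))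
      = LinearMap.mul' k k ∘ₗ
          TensorProduct.map (BC.form.flip x) (BC.form.flip (BC.auto y)) ∘ₗ BC.comul := by
  ext h
  have e : BC.form h (BC.auto.symm (BC.auto.symm (BC.mul x (BC.auto y))))
      = BC.form (BC.auto (BC.auto h)) (BC.mul x (BC.auto y)) := by
    rw [← BC.cha5, ← BC.cha5, LinearEquiv.apply_symm_apply, LinearEquiv.apply_symm_apply]
  simp only [LinearMap.flip_apply, LinearMap.comp_apply]
  rw [e, BC.cha2, BC.comul_auto]
  induction BC.comul h using TensorProduct.induction_on with
  | zero => simp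
  | tmul p q => simp [BC.cha5]
  | add p q hp hq => simp only [map_add, hp, hq]

/-- The coquasitriangular half of the hexagon: both sides of the hexagon contract `u` to the
same vector. -/
theorem contract_hexagon {HA : HomBialgebra k H} (BC : CQTHomHopf k B)
    (L : LongDimodule HA BC.toHomBialgebra M) (x y : B) (u : M) :
    contract L.coact (BC.form.flip (BC.auto.symm (BC.auto.symm (BC.mul x (BC.auto y)))))
        (L.auto.symm u)
      = contract L.coact (BC.form.flip (BC.auto y) ∘ₗ BC.auto.toLinearMap)
          (L.auto.symm (L.auto.symm (contract L.coact (BC.form.flip x) u))) := by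
  rw [contract_auto_symm, ← contract_auto_symm L (BC.form.flip x), contract_contract,
    LinearEquiv.symm_apply_apply, form_flip_mul]

/-- The braiding in coordinates, for a presentation of `R` and of `ρ(n)` as finite sums. -/
theorem braidL_tmul {ι κ : Type*} (R : H ⊗[k] H) (form : B →ₗ[k] B →ₗ[k] k)
    (actM : H →ₗ[k] M →ₗ[k] M) (actN : H →ₗ[k] N →ₗ[k] N)
    (coactM : M →ₗ[k] B ⊗[k] M) (coactN : N →ₗ[k] B ⊗[k] N)
    (aM : M ≃ₗ[k] M) (aN : N ≃ₗ[k] N) (s : Finset ι) (a b : ι → H)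
    (hR : R = ∑ i ∈ s, a i ⊗ₜ[k] b i) (t : Finset κ) (x : κ → B) (y : κ → N)
    (m : M) (n : N) (hn : coactN n = ∑ j ∈ t, x j ⊗ₜ[k] y j) :
    braidL R form actM actN coactM coactN aM aN (m ⊗ₜ[k] n)
      = ∑ j ∈ t, ∑ i ∈ s, actN (b i) (aN.symm (aN.symm (y j))) ⊗ₜ[k]
          actM (a i) (aM.symm (aM.symm (contract coactM (form.flip (x j)) m))) := by
  simp only [braidL, LinearMap.comp_apply, TensorProduct.map_tmul, hn, TensorProduct.tmul_sum,
    map_sum]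
  refine Finset.sum_congr rfl fun j _ => ?_
  simp only [contract, LinearMap.comp_apply]
  induction coactM m using TensorProduct.induction_on with
  | zero => simp
  | tmul p q =>
    simp [braidQT, hR, Finset.smul_sum, TensorProduct.tmul_smul]
  | add p q hp hq =>
    simp only [map_add, TensorProduct.add_tmul, TensorProduct.tmul_add, hp, hq,
      Finset.sum_add_distrib]

/-- A bilinear expression in `R¹`, `R²` does not change when both legs are twisted by `α`. -/
theorem sum_auto_eq (HQ : QTHomHopf k H) (s : Finset (H × H))
    (hR : HQ.R = ∑ i ∈ s, i.1 ⊗ₜ[k] i.2) (f : H →ₗ[k] H →ₗ[k] M) :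
    ∑ i ∈ s, f (HQ.auto i.1) (HQ.auto i.2) = ∑ i ∈ s, f i.1 i.2 := by
  have h := congrArg (TensorProduct.lift f) HQ.qha5
  rw [hR] at h
  simpa using h

/-- The quasitriangular half of the hexagon, with `z` the common contraction of `u` provided by
`contract_hexagon`. -/
theorem act_hexagon {U V W : Type*} [AddCommGroup U] [Module k U] [AddCommGroup V] [Module k V]
    [AddCommGroup W] [Module k W] {BA : HomBialgebra k B} (HQ : QTHomHopf k H)
    (LU : LongDimodule HQ.toHomBialgebra BA U) (LV : LongDimodule HQ.toHomBialgebra BA V)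
    (LW : LongDimodule HQ.toHomBialgebra BA W) (s : Finset (H × H))
    (hR : HQ.R = ∑ i ∈ s, i.1 ⊗ₜ[k] i.2) (v : V) (w : W) (z : U) :
    ∑ i ∈ s, assocL LV.auto LU.auto
        (tAct HQ.comul LV.act LW.act i.2 (v ⊗ₜ[k] w) ⊗ₜ[k]
          LU.act i.1 (LU.auto.symm (LU.auto.symm z)))
      = ∑ j ∈ s, ∑ i ∈ s, LV.auto.symm (LV.act j.2 v) ⊗ₜ[k]
          (LW.act i.2 w ⊗ₜ[k] LU.act i.1 (LU.auto.symm (LU.auto.symm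
            (LU.act (HQ.auto j.1) z)))) := by
  set z₀ := LU.auto.symm (LU.auto.symm z) with hz₀
  have hz : z = LU.auto (LU.auto z₀) := by simp [hz₀]
  -- `p ⊗ (q ⊗ r) ↦ ν⁻¹(q · v) ⊗ (r · w ⊗ p · μ(z₀))`
  let Ψ : H ⊗[k] (H ⊗[k] H) →ₗ[k] V ⊗[k] (W ⊗[k] U) :=
    (TensorProduct.assoc k V W U).toLinearMap ∘ₗ
      (TensorProduct.comm k U (V ⊗[k] W)).toLinearMap ∘ₗ
      TensorProduct.map (LU.act.flip (LU.auto z₀))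
        (TensorProduct.map (LV.auto.symm.toLinearMap ∘ₗ LV.act.flip v) (LW.act.flip w))
  have hΨ : ∀ p q r : H, Ψ (p ⊗ₜ[k] (q ⊗ₜ[k] r))
      = LV.auto.symm (LV.act q v) ⊗ₜ[k] (LW.act r w ⊗ₜ[k] LU.act p (LU.auto z₀)) := by
    intro p q r
    simp [Ψ]
  have hleft : ∀ p q : H, assocL LV.auto LU.auto
      (tAct HQ.comul LV.act LW.act q (v ⊗ₜ[k] w) ⊗ₜ[k] LU.act p z₀)
      = Ψ (HQ.auto p ⊗ₜ[k] HQ.comul q) := by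
    intro p q
    simp only [tAct, TensorProduct.curry_apply, LinearMap.comp_apply, TensorProduct.map_tmul,
      LinearMap.id_apply]
    induction HQ.comul q using TensorProduct.induction_on with
    | zero => simp
    | tmul a b =>
      rw [hΨ]
      simp [assocL, LU.auto_act]
    | add a b ha hb => simp only [map_add, TensorProduct.add_tmul, TensorProduct.tmul_add, ha, hb]
  have h3 := congrArg Ψ HQ.qha3
  rw [hR] at h3
  simp only [map_sum, TensorProduct.map_tmul, TensorProduct.sum_tmul, TensorProduct.tmul_sum,
    TensorProduct.tensorTensorTensorComm_tmul, TensorProduct.lift.tmul, LinearMap.comp_apply,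
    LinearEquiv.coe_coe, TensorProduct.comm_tmul, hΨ] at h3
  simp only [hleft]
  refine h3.trans ?_
  -- The summand as a bilinear expression in the copy of `R` acting on `w`, the pair `j` fixed.
  let f : H × H → H →ₗ[k] H →ₗ[k] V ⊗[k] (W ⊗[k] U) := fun j =>
    LinearMap.mk₂ k (fun p q => LV.auto.symm (LV.act (HQ.auto j.2) v) ⊗ₜ[k]
        (LW.act q w ⊗ₜ[k] LU.act p (LU.act j.1 z₀)))
      (by simp [TensorProduct.tmul_add]) (by simp)
      (by simp [TensorProduct.tmul_add, TensorProduct.add_tmul])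
      (by simp [← TensorProduct.smul_tmul'])
  -- The summand as a bilinear expression in the copy of `R` acting on `v`, the pair `i` fixed.
  let g : H × H → H →ₗ[k] H →ₗ[k] V ⊗[k] (W ⊗[k] U) := fun i =>
    LinearMap.mk₂ k (fun p q => LV.auto.symm (LV.act q v) ⊗ₜ[k]
        (LW.act i.2 w ⊗ₜ[k] LU.act i.1 (LU.auto.symm (LU.auto.symm (LU.act (HQ.auto p) z)))))
      (by simp [TensorProduct.tmul_add]) (by simp)
      (by simp [TensorProduct.add_tmul]) (by simp [TensorProduct.smul_tmul'])
  have hu : ∀ p : H, LU.auto.symm (LU.auto.symm (LU.act (HQ.auto (HQ.auto p)) z))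
      = LU.act p z₀ := by
    intro p
    rw [hz, ← LU.auto_act, ← LU.auto_act, LinearEquiv.symm_apply_apply,
      LinearEquiv.symm_apply_apply]
  calc _ = ∑ j ∈ s, ∑ i ∈ s, f j (HQ.auto i.1) (HQ.auto i.2) := by
        refine Finset.sum_congr rfl fun j _ => Finset.sum_congr rfl fun i _ => ?_
        simp [f, LU.act_act]
    _ = ∑ j ∈ s, ∑ i ∈ s, f j i.1 i.2 := by simp only [sum_auto_eq HQ s hR]
    _ = ∑ i ∈ s, ∑ j ∈ s, g i (HQ.auto j.1) (HQ.auto j.2) := by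
        rw [Finset.sum_comm]
        refine Finset.sum_congr rfl fun i _ => Finset.sum_congr rfl fun j _ => ?_
        change _ = LV.auto.symm (LV.act (HQ.auto j.2) v) ⊗ₜ[k] (LW.act i.2 w ⊗ₜ[k]
          LU.act i.1 (LU.auto.symm (LU.auto.symm (LU.act (HQ.auto (HQ.auto j.1)) z))))
        rw [hu]
        rfl
    _ = ∑ i ∈ s, ∑ j ∈ s, g i j.1 j.2 := by simp only [sum_auto_eq HQ s hR]
    _ = _ := by
        rw [Finset.sum_comm]
        rfl

end HexagonHelpers

/-- the first hexagon identity for the Long braiding, with the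
Hom-associator `a_{U,V,W}((u ⊗ v) ⊗ w) = μ_U⁻¹(u) ⊗ (v ⊗ ω_W(w))`. -/
theorem braid_hexagon_one
    {k H B U V W : Type*} [Field k]
    [AddCommGroup H] [Module k H] [AddCommGroup B] [Module k B]
    [AddCommGroup U] [Module k U] [AddCommGroup V] [Module k V] [AddCommGroup W] [Module k W]
    (HQ : QTHomHopf k H) (BC : CQTHomHopf k B)
    (LU : LongDimodule HQ.toHomBialgebra BC.toHomBialgebra U)
    (LV : LongDimodule HQ.toHomBialgebra BC.toHomBialgebra V)
    (LW : LongDimodule HQ.toHomBialgebra BC.toHomBialgebra W) :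
    assocL LV.auto LU.auto ∘ₗ
        braidL HQ.R BC.form LU.act (tAct HQ.comul LV.act LW.act) LU.coact
          (tCoact BC.mul (BC.auto.symm.toLinearMap ∘ₗ BC.auto.symm.toLinearMap)
            LV.coact LW.coact)
          LU.auto (TensorProduct.congr LV.auto LW.auto) ∘ₗ
        assocL LU.auto LW.auto
      = TensorProduct.map (LinearMap.id : V →ₗ[k] V)
            (braidL HQ.R BC.form LU.act LW.act LU.coact LW.coact LU.auto LW.auto) ∘ₗ
          assocL LV.auto LW.auto ∘ₗ
          TensorProduct.map
            (braidL HQ.R BC.form LU.act LV.act LU.coact LV.coact LU.auto LV.auto)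
            (LinearMap.id : W →ₗ[k] W) := by
  obtain ⟨s, hR⟩ := TensorProduct.exists_finset HQ.R
  refine TensorProduct.ext_threefold fun u v w => ?_
  obtain ⟨tv, hv⟩ := TensorProduct.exists_finset (LV.coact v)
  obtain ⟨tw, hw⟩ := TensorProduct.exists_finset (LW.coact w)
  have hw' : LW.coact (LW.auto w)
      = ∑ l ∈ tw, BC.auto l.1 ⊗ₜ[k] LW.auto l.2 := by
    rw [LW.coact_auto, hw]
    simp
  have hvw : tCoact BC.mul (BC.auto.symm.toLinearMap ∘ₗ BC.auto.symm.toLinearMap)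
      LV.coact LW.coact (v ⊗ₜ[k] LW.auto w)
      = ∑ p ∈ tv ×ˢ tw, BC.auto.symm (BC.auto.symm (BC.mul p.1.1 (BC.auto p.2.1))) ⊗ₜ[k]
          (p.1.2 ⊗ₜ[k] LW.auto p.2.2) := by
    simp only [tCoact, LinearMap.comp_apply, TensorProduct.map_tmul, hv, hw',
      TensorProduct.sum_tmul, TensorProduct.tmul_sum, map_sum, Finset.sum_product]
    rw [Finset.sum_comm]
    rfl
  have hL : assocL LU.auto LW.auto ((u ⊗ₜ[k] v) ⊗ₜ[k] w)
      = LU.auto.symm u ⊗ₜ[k] (v ⊗ₜ[k] LW.auto w) := by simp [assocL]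
  simp only [LinearMap.comp_apply, TensorProduct.map_tmul, LinearMap.id_apply]
  rw [hL, braidL_tmul _ _ _ _ _ _ _ _ s _ _ hR _ _ _ _ _ hvw,
    braidL_tmul _ _ _ _ _ _ _ _ s _ _ hR _ _ _ _ _ hv]
  simp only [TensorProduct.sum_tmul, map_sum, Finset.sum_product]
  refine Finset.sum_congr rfl fun j _ => ?_
  have hRHS : ∀ (p : V) (q : U), TensorProduct.map (LinearMap.id : V →ₗ[k] V)
      (braidL HQ.R BC.form LU.act LW.act LU.coact LW.coact LU.auto LW.auto)
      (assocL LV.auto LW.auto ((p ⊗ₜ[k] q) ⊗ₜ[k] w))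
      = ∑ l ∈ tw, ∑ i ∈ s, LV.auto.symm p ⊗ₜ[k]
          (LW.act i.2 (LW.auto.symm (LW.auto.symm (LW.auto l.2))) ⊗ₜ[k]
            LU.act i.1 (LU.auto.symm (LU.auto.symm
              (contract LU.coact (BC.form.flip (BC.auto l.1)) q)))) := by
    intro p q
    have : assocL LV.auto LW.auto ((p ⊗ₜ[k] q) ⊗ₜ[k] w)
        = LV.auto.symm p ⊗ₜ[k] (q ⊗ₜ[k] LW.auto w) := by simp [assocL]
    rw [this, TensorProduct.map_tmul, braidL_tmul _ _ _ _ _ _ _ _ s _ _ hR _ _ _ _ _ hw']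
    simp [TensorProduct.tmul_sum]
  simp only [hRHS]
  refine Eq.trans ?_ Finset.sum_comm
  refine Finset.sum_congr rfl fun l _ => ?_
  simp only [contract_act, contract_hexagon]
  exact act_hexagon HQ LU LV LW s hR _ _ _
end

section
/- Let (H,α,R) be a quasitriangular Hom-Hopf algebra, (B,β,⟨|⟩) a coquasitriangular Hom-Hopf algebra, and (U,μ_U),(V,ν_V),(W,ω_W) (H,B)-Hom-Long dimodules. With C_{M,N}(m⊗n)=⟨m₋₁|n₋₁⟩ R²·ν_N⁻²(n₀)⊗R¹·μ_M⁻²(m₀) (where U⊗V carries the tensor Long dimodule structure), and with associator a_{U,V,W}:(U⊗V)⊗W→U⊗(V⊗W), (u⊗v)⊗w↦μ_U⁻¹(u)⊗(v⊗ω_W(w)), the second hexagon identity holds: a⁻¹_{W,U,V}∘C_{U⊗V,W}∘a⁻¹_{U,V,W}=(C_{U,W}⊗id_V)∘a⁻¹_{U,W,V}∘(id_U⊗C_{V,W}) as linear maps U⊗(V⊗W)→(W⊗U)⊗V. -/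
/-!
Evaluate both sides at `u ⊗ (v ⊗ w)`. By the compatibility `ρ(h·m) = β(m₋₁) ⊗ α(h)·m₀`, the form and
the `R`-matrix decouple, so that each side is a scalar made of the form times an `H`-part.

* `H`-part (`hexagon_R`): on the left it is `α(R²)·ω⁻²(w₀) ⊗ R¹₁·μ⁻¹(u₀) ⊗ α⁻¹(R¹₂)·ν⁻³(v₀)`,
  on the right `R²r²·ω⁻²(w₀) ⊗ α(R¹)·μ⁻¹(u₀) ⊗ r¹·ν⁻³(v₀)`, using the `α`-invariance of `R`
  and Hom-associativity of the action. These agree by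
  `(R¹)₁ ⊗ (R¹)₂ ⊗ α(R²) = α(R¹) ⊗ α(r¹) ⊗ R²r²`.
* `B`-part: the scalar on the left is `⟨β(u₋₁)v₋₁|β(w₋₁)⟩ = ⟨β(v₋₁)|w₋₁₁⟩⟨β²(u₋₁)|w₋₁₂⟩`. On the
  right (`hexagon_coact`) it is `⟨v₋₁|w₋₁⟩⟨β(u₋₁)|β⁻¹((w₀)₋₁)⟩`, which Hom-coassociativity of the
  coaction on `W` and `β`-invariance of the form turn into the same expression.

Sweedler-type calculations become inductions on elements of tensor products, one leg at a time.
-/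

open TensorProduct

section Hexagon

variable {k H B M N U V W X : Type*} [Field k]
variable [AddCommGroup H] [Module k H] [AddCommGroup B] [Module k B]
variable [AddCommGroup M] [Module k M] [AddCommGroup N] [Module k N]
variable [AddCommGroup U] [Module k U] [AddCommGroup V] [Module k V] [AddCommGroup W] [Module k W]
variable [AddCommGroup X] [Module k X]

/-- `(b ⊗ m) ⊗ (c ⊗ n) ↦ f(b, c) L(m ⊗ n)`: contraction of the two coaction legs by a bilinear
form, with a linear map applied to the remaining legs. -/
noncomputable def pairing (f : B →ₗ[k] B →ₗ[k] k) (L : M ⊗[k] N →ₗ[k] X) :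
    (B ⊗[k] M) ⊗[k] (B ⊗[k] N) →ₗ[k] X :=
  (TensorProduct.lid k X).toLinearMap ∘ₗ TensorProduct.map (TensorProduct.lift f) L ∘ₗ
    (TensorProduct.tensorTensorTensorComm k B M B N).toLinearMap

@[simp]
lemma pairing_tmul (f : B →ₗ[k] B →ₗ[k] k) (L : M ⊗[k] N →ₗ[k] X) (b c : B) (m : M) (n : N) :
    pairing f L ((b ⊗ₜ m) ⊗ₜ (c ⊗ₜ n)) = f b c • L (m ⊗ₜ n) := by
  simp [pairing]

/-- The Long braiding is the quasitriangular braiding after contracting the coaction legs. -/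
lemma braidL_tmul_s9 (R : H ⊗[k] H) (form : B →ₗ[k] B →ₗ[k] k)
    (actM : H →ₗ[k] M →ₗ[k] M) (actN : H →ₗ[k] N →ₗ[k] N)
    (coactM : M →ₗ[k] B ⊗[k] M) (coactN : N →ₗ[k] B ⊗[k] N)
    (aM : M ≃ₗ[k] M) (aN : N ≃ₗ[k] N) (m : M) (n : N) :
    braidL R form actM actN coactM coactN aM aN (m ⊗ₜ n)
      = pairing form (braidQT R actM actN (aM.trans aM) (aN.trans aN))
          (coactM m ⊗ₜ coactN n) := by
  simp only [braidL, LinearMap.comp_apply, TensorProduct.map_tmul, LinearEquiv.coe_coe]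
  generalize coactM m = p
  generalize coactN n = q
  induction p with
  | zero => simp
  | add x y hx hy => simp only [TensorProduct.add_tmul, map_add, hx, hy]
  | tmul b m =>
    induction q with
    | zero => simp
    | add x y hx hy => simp only [TensorProduct.tmul_add, map_add, hx, hy]
    | tmul c n => simp

lemma braidQT_R_tmul (r s : H)
    (actM : H →ₗ[k] M →ₗ[k] M) (actN : H →ₗ[k] N →ₗ[k] N)
    (aM : M ≃ₗ[k] M) (aN : N ≃ₗ[k] N) (m : M) (n : N) :
    braidQT (r ⊗ₜ s) actM actN aM aN (m ⊗ₜ n) = actN s (aN.symm n) ⊗ₜ actM r (aM.symm m) := by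
  simp [braidQT]

lemma braidQT_R_add (R R' : H ⊗[k] H)
    (actM : H →ₗ[k] M →ₗ[k] M) (actN : H →ₗ[k] N →ₗ[k] N)
    (aM : M ≃ₗ[k] M) (aN : N ≃ₗ[k] N) :
    braidQT (R + R') actM actN aM aN
      = braidQT R actM actN aM aN + braidQT R' actM actN aM aN := by
  simp only [braidQT, map_add, LinearMap.add_comp, LinearMap.comp_add]

lemma braidQT_R_zero
    (actM : H →ₗ[k] M →ₗ[k] M) (actN : H →ₗ[k] N →ₗ[k] N)
    (aM : M ≃ₗ[k] M) (aN : N ≃ₗ[k] N) :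
    braidQT 0 actM actN aM aN = 0 := by
  simp only [braidQT, map_zero, LinearMap.zero_comp, LinearMap.comp_zero]

variable {HA : HomBialgebra k H} {BA : HomBialgebra k B}

lemma LongDimodule.auto_symm_act (L : LongDimodule HA BA M) (h : H) (m : M) :
    L.auto.symm (L.act h m) = L.act (HA.auto.symm h) (L.auto.symm m) := by
  rw [LinearEquiv.symm_apply_eq, L.auto_act]; simp

lemma LongDimodule.coact_auto_symm (L : LongDimodule HA BA M) (m : M) :
    L.coact (L.auto.symm m)
      = TensorProduct.map BA.auto.symm.toLinearMap L.auto.symm.toLinearMap (L.coact m) := by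
  have h := L.coact_auto (L.auto.symm m)
  rw [LinearEquiv.apply_symm_apply] at h
  rw [h, ← LinearMap.comp_apply, ← TensorProduct.map_comp]
  simp

/-- `(x ⊗ y) ⊗ z ↦ (z·w ⊗ x·u) ⊗ α⁻¹(y)·v`. Both sides of the `H`-part of the hexagon are values
of this map at elements of `(H ⊗ H) ⊗ H` built from `R`. -/
noncomputable def legs (HA : HomBialgebra k H) (LU : LongDimodule HA BA U)
    (LV : LongDimodule HA BA V) (LW : LongDimodule HA BA W) (u : U) (v : V) (w : W) :
    (H ⊗[k] H) ⊗[k] H →ₗ[k] (W ⊗[k] U) ⊗[k] V :=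
  (TensorProduct.assoc k W U V).symm.toLinearMap ∘ₗ
    (TensorProduct.comm k (U ⊗[k] V) W).toLinearMap ∘ₗ
    TensorProduct.map (TensorProduct.map (LU.act.flip u)
      (LV.act.flip v ∘ₗ HA.auto.symm.toLinearMap)) (LW.act.flip w)

/-- The `H`-part of the hexagon. In terms of `legs`, the left side is the value at
`R¹₁ ⊗ R¹₂ ⊗ α(R²)` and the right side, after replacing `R` by `α(R¹) ⊗ α(R²)`, the value at
`α(R¹) ⊗ α(r¹) ⊗ R²r²`; these agree by `qha2`. The factor `LW.auto` on the right is what the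
compatibility of action and coaction contributes when the two braidings are composed. -/
lemma hexagon_R (HQ : QTHomHopf k H)
    (LU : LongDimodule HQ.toHomBialgebra BA U)
    (LV : LongDimodule HQ.toHomBialgebra BA V)
    (LW : LongDimodule HQ.toHomBialgebra BA W) (u : U) (v : V) (w : W) :
    assocLinv LW.auto LV.auto
        (braidQT HQ.R (tAct HQ.comul LU.act LV.act) LW.act
          ((TensorProduct.congr LU.auto LV.auto).trans (TensorProduct.congr LU.auto LV.auto))
          (LW.auto.trans LW.auto) ((LU.auto u ⊗ₜ v) ⊗ₜ LW.auto.symm w))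
      = TensorProduct.map
          (braidQT HQ.R LU.act LW.act (LU.auto.trans LU.auto) (LW.auto.trans LW.auto))
          (LinearMap.id : V →ₗ[k] V)
          (assocLinv LU.auto LV.auto (u ⊗ₜ
            TensorProduct.map LW.auto.toLinearMap (LinearMap.id : V →ₗ[k] V)
              (braidQT HQ.R LV.act LW.act (LV.auto.trans LV.auto) (LW.auto.trans LW.auto)
                (v ⊗ₜ w)))) := by
  set Φ := legs HQ.toHomBialgebra LU LV LW (LU.auto.symm u)
    (LV.auto.symm (LV.auto.symm (LV.auto.symm v))) (LW.auto.symm (LW.auto.symm w)) with hΦ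
  have hL : ∀ R : H ⊗[k] H, assocLinv LW.auto LV.auto
        (braidQT R (tAct HQ.comul LU.act LV.act) LW.act
          ((TensorProduct.congr LU.auto LV.auto).trans (TensorProduct.congr LU.auto LV.auto))
          (LW.auto.trans LW.auto) ((LU.auto u ⊗ₜ v) ⊗ₜ LW.auto.symm w))
      = Φ (TensorProduct.map HQ.comul HQ.auto.toLinearMap R) := by
    intro R
    induction R with
    | zero => simp [braidQT_R_zero]
    | add x y hx hy => simp only [braidQT_R_add, LinearMap.add_apply, map_add, hx, hy]
    | tmul r s =>
      rw [braidQT_R_tmul]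
      simp only [tAct, TensorProduct.curry_apply, LinearMap.comp_apply, TensorProduct.map_tmul]
      generalize HQ.comul r = c
      induction c with
      | zero => simp
      | add x y hx hy =>
        simp only [TensorProduct.add_tmul, TensorProduct.tmul_add, map_add, hx, hy]
      | tmul a b =>
        simp [hΦ, legs, assocLinv, LW.auto_act, LV.auto_symm_act]
  have hR : ∀ R R' : H ⊗[k] H, TensorProduct.map
          (braidQT (TensorProduct.map HQ.auto.toLinearMap HQ.auto.toLinearMap R)
            LU.act LW.act (LU.auto.trans LU.auto) (LW.auto.trans LW.auto))
          (LinearMap.id : V →ₗ[k] V)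
          (assocLinv LU.auto LV.auto (u ⊗ₜ
            TensorProduct.map LW.auto.toLinearMap (LinearMap.id : V →ₗ[k] V)
              (braidQT (TensorProduct.map HQ.auto.toLinearMap HQ.auto.toLinearMap R')
                LV.act LW.act (LV.auto.trans LV.auto) (LW.auto.trans LW.auto)
                (v ⊗ₜ w))))
      = Φ (TensorProduct.map (TensorProduct.map HQ.auto.toLinearMap HQ.auto.toLinearMap)
          (TensorProduct.lift HQ.mul)
          (TensorProduct.tensorTensorTensorComm k H H H H (R ⊗ₜ[k] R'))) := by
    intro R R'
    induction R with
    | zero => simp [braidQT_R_zero]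
    | add x y hx hy =>
      simp only [braidQT_R_add, TensorProduct.map_add_left, LinearMap.add_apply, map_add,
        TensorProduct.add_tmul, hx, hy]
    | tmul r s =>
      induction R' with
      | zero => simp [braidQT_R_zero]
      | add x y hx hy =>
        simp only [braidQT_R_add, LinearMap.add_apply, map_add, TensorProduct.tmul_add, hx, hy]
      | tmul r' s' =>
        have key := LW.act_act s s' (LW.auto.symm (LW.auto.symm (LW.auto.symm w)))
        rw [LinearEquiv.apply_symm_apply] at key
        simp [hΦ, legs, assocLinv, braidQT_R_tmul, LW.auto_symm_act, LV.auto_symm_act, key]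
  rw [hL, HQ.qha2, ← hR, HQ.qha5]

/-- The outer braiding on the right-hand side of the hexagon, with its coaction moved past the action
of the inner `R'` by the Long compatibility condition, so that only the coactions of `u` and `w`
themselves remain. -/
lemma hexagon_coact (HQ : QTHomHopf k H) (BC : CQTHomHopf k B)
    (LU : LongDimodule HQ.toHomBialgebra BC.toHomBialgebra U)
    (LV : LongDimodule HQ.toHomBialgebra BC.toHomBialgebra V)
    (LW : LongDimodule HQ.toHomBialgebra BC.toHomBialgebra W)
    (R R' : H ⊗[k] H) (u : U) (v : V) (w : W) :
    TensorProduct.map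
        (braidL R BC.form LU.act LW.act LU.coact LW.coact LU.auto LW.auto)
        (LinearMap.id : V →ₗ[k] V)
        (assocLinv LU.auto LV.auto (u ⊗ₜ
          braidQT R' LV.act LW.act (LV.auto.trans LV.auto) (LW.auto.trans LW.auto) (v ⊗ₜ w)))
      = pairing (BC.form.compl₁₂ BC.auto.toLinearMap BC.auto.symm.toLinearMap)
          (TensorProduct.map
            (braidQT R LU.act LW.act (LU.auto.trans LU.auto) (LW.auto.trans LW.auto))
            (LinearMap.id : V →ₗ[k] V) ∘ₗ
          assocLinv LU.auto LV.auto ∘ₗ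
          TensorProduct.map (LinearMap.id : U →ₗ[k] U)
            (TensorProduct.map LW.auto.toLinearMap (LinearMap.id : V →ₗ[k] V) ∘ₗ
              braidQT R' LV.act LW.act (LV.auto.trans LV.auto) (LW.auto.trans LW.auto) ∘ₗ
              TensorProduct.mk k V W v ∘ₗ LW.auto.symm.toLinearMap))
          (LU.coact u ⊗ₜ LW.coact w) := by
  induction R' with
  | zero =>
    simp only [braidQT_R_zero, LinearMap.zero_apply, TensorProduct.tmul_zero, map_zero,
      LinearMap.zero_comp, LinearMap.comp_zero, TensorProduct.map_zero_right]
    simp [pairing]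
  | add x y hx hy =>
    simp only [braidQT_R_add, LinearMap.add_apply, TensorProduct.tmul_add, map_add, hx, hy,
      LinearMap.add_comp, LinearMap.comp_add, TensorProduct.map_add_right, pairing]
  | tmul r s =>
    simp only [braidQT_R_tmul, assocLinv, LinearMap.comp_apply, TensorProduct.map_tmul,
      LinearEquiv.coe_coe, LinearEquiv.trans_symm, LinearEquiv.trans_apply,
      TensorProduct.assoc_symm_tmul, LinearMap.id_apply, braidL_tmul_s9, LW.compat,
      LW.coact_auto_symm, LU.coact_auto]
    generalize LU.coact u = p
    generalize LW.coact w = q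
    induction p with
    | zero => simp
    | add x y hx hy => simp only [TensorProduct.add_tmul, map_add, hx, hy]
    | tmul b u =>
      induction q with
      | zero => simp
      | add x y hx hy => simp only [TensorProduct.tmul_add, TensorProduct.add_tmul, map_add, hx, hy]
      | tmul c w =>
        simp [braidQT_R_tmul, TensorProduct.smul_tmul', LW.auto_act]

end Hexagon

/-- the second hexagon identity for the Long braiding. -/
theorem braid_hexagon_two
    {k H B U V W : Type*} [Field k]
    [AddCommGroup H] [Module k H] [AddCommGroup B] [Module k B]
    [AddCommGroup U] [Module k U] [AddCommGroup V] [Module k V] [AddCommGroup W] [Module k W]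
    (HQ : QTHomHopf k H) (BC : CQTHomHopf k B)
    (LU : LongDimodule HQ.toHomBialgebra BC.toHomBialgebra U)
    (LV : LongDimodule HQ.toHomBialgebra BC.toHomBialgebra V)
    (LW : LongDimodule HQ.toHomBialgebra BC.toHomBialgebra W) :
    assocLinv LW.auto LV.auto ∘ₗ
        braidL HQ.R BC.form (tAct HQ.comul LU.act LV.act) LW.act
          (tCoact BC.mul (BC.auto.symm.toLinearMap ∘ₗ BC.auto.symm.toLinearMap)
            LU.coact LV.coact)
          LW.coact (TensorProduct.congr LU.auto LV.auto) LW.auto ∘ₗ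
        assocLinv LU.auto LW.auto
      = TensorProduct.map
            (braidL HQ.R BC.form LU.act LW.act LU.coact LW.coact LU.auto LW.auto)
            (LinearMap.id : V →ₗ[k] V) ∘ₗ
          assocLinv LU.auto LV.auto ∘ₗ
          TensorProduct.map (LinearMap.id : U →ₗ[k] U)
            (braidL HQ.R BC.form LV.act LW.act LV.coact LW.coact LV.auto LW.auto) := by
  ext u v w
  simp only [TensorProduct.AlgebraTensorModule.curry_apply, TensorProduct.curry_apply,
    LinearMap.restrictScalars_self, LinearMap.comp_apply]
  have hL : assocLinv (V := V) LU.auto LW.auto (u ⊗ₜ (v ⊗ₜ w))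
      = (LU.auto u ⊗ₜ v) ⊗ₜ LW.auto.symm w := by simp [assocLinv]
  rw [hL, braidL_tmul_s9, TensorProduct.map_tmul, braidL_tmul_s9, LW.coact_auto_symm]
  simp only [tCoact, LinearMap.comp_apply, TensorProduct.map_tmul, LU.coact_auto,
    LinearMap.id_apply]
  generalize LV.coact v = q
  induction q with
  | zero => simp
  | add x y hx hy =>
    simp only [TensorProduct.add_tmul, TensorProduct.tmul_add, map_add, hx, hy]
  | tmul c v =>
    -- `L` is the `H`-part of the right-hand side, as a function of `u₀ ⊗ w₀₀`.
    set L := TensorProduct.map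
            (braidQT HQ.R LU.act LW.act (LU.auto.trans LU.auto) (LW.auto.trans LW.auto))
            (LinearMap.id : V →ₗ[k] V) ∘ₗ
          assocLinv LU.auto LV.auto ∘ₗ
          TensorProduct.map (LinearMap.id : U →ₗ[k] U)
            (TensorProduct.map LW.auto.toLinearMap (LinearMap.id : V →ₗ[k] V) ∘ₗ
              braidQT HQ.R LV.act LW.act (LV.auto.trans LV.auto) (LW.auto.trans LW.auto) ∘ₗ
              TensorProduct.mk k V W v ∘ₗ LW.auto.symm.toLinearMap) with hLdef
    -- `Ψ p` collects the right-hand side as a linear function of `β(w₋₁) ⊗ (w₀)₋₁ ⊗ (w₀)₀`, the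
    -- shape to which Hom-coassociativity applies.
    set Ψ : B ⊗[k] U → B ⊗[k] (B ⊗[k] W) →ₗ[k] (W ⊗[k] U) ⊗[k] V := fun p =>
      (TensorProduct.lid k _).toLinearMap ∘ₗ
        TensorProduct.map (BC.form c ∘ₗ BC.auto.symm.toLinearMap)
          (pairing (BC.form.compl₁₂ BC.auto.toLinearMap BC.auto.symm.toLinearMap) L ∘ₗ
            TensorProduct.mk k _ _ p) with hΨ
    have hRHS : ∀ t : B ⊗[k] W, TensorProduct.map
          (braidL HQ.R BC.form LU.act LW.act LU.coact LW.coact LU.auto LW.auto)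
          (LinearMap.id : V →ₗ[k] V)
          (assocLinv LU.auto LV.auto (u ⊗ₜ pairing BC.form
            (braidQT HQ.R LV.act LW.act (LV.auto.trans LV.auto) (LW.auto.trans LW.auto))
            ((c ⊗ₜ v) ⊗ₜ t)))
        = Ψ (LU.coact u) (TensorProduct.map BC.auto.toLinearMap LW.coact t) := by
      intro t
      induction t with
      | zero => simp
      | add x y hx hy => simp only [TensorProduct.tmul_add, map_add, hx, hy]
      | tmul d w =>
        rw [pairing_tmul, TensorProduct.tmul_smul, map_smul, map_smul, hexagon_coact]
        simp [hΨ, hLdef]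
    rw [hRHS, LW.hom_coassoc]
    generalize LU.coact u = p
    generalize LW.coact w = t
    induction t with
    | zero => simp
    | add x y hx hy => simp only [TensorProduct.tmul_add, map_add, hx, hy]
    | tmul d w =>
      induction p with
      | zero => simp [hΨ]
      | add x y hx hy =>
        simp only [hΨ, map_add, LinearMap.comp_add, TensorProduct.map_add_right,
          LinearMap.add_apply, TensorProduct.add_tmul] at hx hy ⊢
        rw [hx, hy]
      | tmul b u =>
        have hLw : L (u ⊗ₜ LW.auto w) = assocLinv LW.auto LV.auto
            (braidQT HQ.R (tAct HQ.comul LU.act LV.act) LW.act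
              ((TensorProduct.congr LU.auto LV.auto).trans (TensorProduct.congr LU.auto LV.auto))
              (LW.auto.trans LW.auto) ((LU.auto u ⊗ₜ v) ⊗ₜ LW.auto.symm w)) := by
          rw [hexagon_R]; simp [hLdef]
        -- Invariance of the form under `β` cancels `β⁻²` from the tensor coaction and `β⁻¹` from the
        -- associator, leaving the left-hand side of `cha1`.
        have hform : BC.form (BC.auto.symm (BC.auto.symm (BC.mul (BC.auto b) c)))
            (BC.auto.symm d) = BC.form (BC.mul (BC.auto b) c) (BC.auto d) := by
          rw [← BC.cha5, ← BC.cha5]; simp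
        have hΨd : ∀ x : B ⊗[k] B, Ψ (b ⊗ₜ u) (TensorProduct.assoc k B B W (x ⊗ₜ LW.auto w))
            = LinearMap.mul' k k (TensorProduct.map (BC.form (BC.auto c))
                (BC.form (BC.auto (BC.auto b))) x) • L (u ⊗ₜ LW.auto w) := by
          intro x
          induction x with
          | zero => simp
          | add x y hx hy => simp only [TensorProduct.add_tmul, map_add, add_smul, hx, hy]
          | tmul d₁ d₂ =>
            have h1 : BC.form c (BC.auto.symm d₁) = BC.form (BC.auto c) d₁ := by
              rw [← BC.cha5]; simp
            have h2 : BC.form (BC.auto b) (BC.auto.symm d₂)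
                = BC.form (BC.auto (BC.auto b)) d₂ := by
              rw [← BC.cha5]; simp
            simp [hΨ, h1, h2, mul_smul, smul_comm (BC.form (BC.auto (BC.auto b)) d₂)]
        rw [TensorProduct.map_tmul BC.comul, LinearEquiv.coe_coe LW.auto, hΨd, ← BC.cha1, hLw, ← hform]
        simp
end
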